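/- arXiv:2311.06387 — 4 statements merged into one kernel-verified Lean document; each statement's English description precedes it below -/
import Mathlib

section
/- Let P ⊆ Φ_{B_n} be a signed poset and let x lie in the topological interior of the root cone K^rt_P. Then ⟨x, χ_{J^w_m}⟩ > 0 for every w ∈ 𝓛(P) and every 1 ≤ m ≤ n, the function u ↦ e^{−⟨x,u⟩} is Lebesgue-integrable on the weight cone K^wt_P, and ∫_{K^wt_P} e^{−⟨x,u⟩} du = Σ_{w ∈ 𝓛(P)} ∏_{m=1}^n ⟨x, χ_{J^w_m}⟩^{−1}, the integral being with respect to Lebesgue measure on ℝ^n. -/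
open scoped Classical

noncomputable section

/-- Signed index set `±[n]`: `(true, i)` represents `+i`, `(false, i)` represents `-i`. -/
abbrev SIdx (n : ℕ) := Bool × Fin n

/-- Negation `a ↦ -a` on `±[n]`. -/
def negS {n : ℕ} (a : SIdx n) : SIdx n := (!a.1, a.2)

/-- Standard basis vector `e_i` of `ℝ^n`. -/
def stdB (n : ℕ) (i : Fin n) : Fin n → ℝ := Pi.single i 1

/-- `rsgn true = 1`, `rsgn false = -1`. -/
def rsgn (s : Bool) : ℝ := if s then 1 else -1

/-- `v(a)` for `a ∈ ±[n]`: `v(+i) = e_i`, `v(-i) = -e_i`. -/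
def vS {n : ℕ} (a : SIdx n) : Fin n → ℝ := rsgn a.1 • stdB n a.2

/-- `v` on `±[n] ∪ {0}` (with `none` playing the role of `0`). -/
def vO {n : ℕ} : Option (SIdx n) → (Fin n → ℝ)
  | none => 0
  | some a => vS a

/-- Negation on `±[n] ∪ {0}`, fixing `0`. -/
def negO {n : ℕ} : Option (SIdx n) → Option (SIdx n)
  | none => none
  | some a => some (negS a)

/-- Standard inner product on `ℝ^n`. -/
def dotR {n : ℕ} (x y : Fin n → ℝ) : ℝ := ∑ i, x i * y i

/-- The type `B_n` root system `Φ_{B_n}`. -/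
def BnRoots (n : ℕ) : Set (Fin n → ℝ) :=
  {α | (∃ i j : Fin n, i < j ∧ ∃ s t : Bool, α = rsgn s • stdB n i + rsgn t • stdB n j) ∨
    ∃ i : Fin n, ∃ s : Bool, α = rsgn s • stdB n i}

/-- The positive roots `Φ⁺_{B_n}`. -/
def BnPos (n : ℕ) : Set (Fin n → ℝ) :=
  {α | (∃ i j : Fin n, i < j ∧ ∃ t : Bool, α = stdB n i + rsgn t • stdB n j) ∨
    ∃ i : Fin n, α = stdB n i}

/-- The type `C_n` root system `Φ_{C_n}`. -/
def CnRoots (n : ℕ) : Set (Fin n → ℝ) :=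
  {α | (∃ i j : Fin n, i < j ∧ ∃ s t : Bool, α = rsgn s • stdB n i + rsgn t • stdB n j) ∨
    ∃ i : Fin n, ∃ s : Bool, α = (2 * rsgn s) • stdB n i}

/-- Nonnegative real linear combinations of elements of `S`. -/
def nnSpan {n : ℕ} (S : Set (Fin n → ℝ)) : Set (Fin n → ℝ) :=
  {x | ∃ (r : ℕ) (c : Fin r → ℝ) (β : Fin r → (Fin n → ℝ)),
    (∀ m, 0 ≤ c m) ∧ (∀ m, β m ∈ S) ∧ x = ∑ m, c m • β m}

/-- A signed poset: a subset of `Φ_{B_n}`, antisymmetric and closed under positive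
linear combinations remaining in `Φ_{B_n}`. -/
def IsSignedPoset (n : ℕ) (P : Set (Fin n → ℝ)) : Prop :=
  P ⊆ BnRoots n ∧ (∀ α ∈ P, -α ∉ P) ∧ ∀ α ∈ BnRoots n, α ∈ nnSpan P → α ∈ P

/-- A `C_n`-signed poset. -/
def IsCnSignedPoset (n : ℕ) (Q : Set (Fin n → ℝ)) : Prop :=
  Q ⊆ CnRoots n ∧ (∀ α ∈ Q, -α ∉ Q) ∧ ∀ α ∈ CnRoots n, α ∈ nnSpan Q → α ∈ Q

/-- The root cone `K^rt_P`. -/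
def rootCone {n : ℕ} (P : Set (Fin n → ℝ)) : Set (Fin n → ℝ) := nnSpan P

/-- The weight cone `K^wt_P`. -/
def weightCone {n : ℕ} (P : Set (Fin n → ℝ)) : Set (Fin n → ℝ) :=
  {f | ∀ α ∈ P, 0 ≤ dotR f α}

/-- The Fischer (strict) order on `±[n] ∪ {0}`:
`a < b` iff `v(a) - v(b) ∈ P`, or (`b = -a ≠ 0` and `v(a) ∈ P`). -/
def fLT {n : ℕ} (P : Set (Fin n → ℝ)) (a b : Option (SIdx n)) : Prop :=
  vO a - vO b ∈ P ∨ (a ≠ none ∧ b = negO a ∧ vO a ∈ P)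

/-- A subset of `±[n]` is isotropic if it contains no pair `{i, -i}`. -/
def Isotropic {n : ℕ} (J : Finset (SIdx n)) : Prop :=
  ∀ i : Fin n, ¬((true, i) ∈ J ∧ (false, i) ∈ J)

/-- Signed characteristic vector of a subset of `±[n]`. -/
def chiF {n : ℕ} (J : Finset (SIdx n)) : Fin n → ℝ := fun i =>
  if (true, i) ∈ J then 1 else if (false, i) ∈ J then -1 else 0

/-- `J` is an ideal of the signed poset `P`. -/
def IsIdeal {n : ℕ} (P : Set (Fin n → ℝ)) (J : Finset (SIdx n)) : Prop :=
  Isotropic J ∧ ∀ α ∈ P, 0 ≤ dotR (chiF J) α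

/-- Comparability in the Fischer order of `P`. -/
def fComp {n : ℕ} (P : Set (Fin n → ℝ)) (a b : SIdx n) : Prop :=
  fLT P (some a) (some b) ∨ fLT P (some b) (some a)

/-- One step in the comparability graph on a subset `J` of `±[n]`. -/
def connStep {n : ℕ} (P : Set (Fin n → ℝ)) (J : Finset (SIdx n)) (a b : SIdx n) : Prop :=
  a ∈ J ∧ b ∈ J ∧ fComp P a b

/-- `J` is connected: nonempty, and any two of its elements are joined by a path inside `J`
in the comparability graph of the Fischer order of `P`. -/
def IsConnectedIdl {n : ℕ} (P : Set (Fin n → ℝ)) (J : Finset (SIdx n)) : Prop :=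
  J.Nonempty ∧ ∀ a ∈ J, ∀ b ∈ J, Relation.ReflTransGen (connStep P J) a b

/-- A connected ideal of `P`. -/
def IsConnIdeal {n : ℕ} (P : Set (Fin n → ℝ)) (J : Finset (SIdx n)) : Prop :=
  IsIdeal P J ∧ IsConnectedIdl P J

/-- Support `supp J = {|a| : a ∈ J}`. -/
def suppF {n : ℕ} (J : Finset (SIdx n)) : Finset (Fin n) := J.image Prod.snd

/-- `J` and `K` intersect nontrivially. -/
def NontrivInter {n : ℕ} (J K : Finset (SIdx n)) : Prop :=
  (suppF J ∩ suppF K).Nonempty ∧ ¬J ⊆ K ∧ ¬K ⊆ J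

/-- `J` and `K` intersect trivially. -/
def TrivInter {n : ℕ} (J K : Finset (SIdx n)) : Prop := ¬NontrivInter J K

/-- A signed permutation, as an anti-symmetric bijection of `±[n]`. -/
def IsSPerm {n : ℕ} (w : SIdx n ≃ SIdx n) : Prop := ∀ a, w (negS a) = negS (w a)

/-- Linear action of a signed permutation on `ℝ^n`, determined by `w(e_i) = v(w(+i))`. -/
def spAct {n : ℕ} (w : SIdx n ≃ SIdx n) (x : Fin n → ℝ) : Fin n → ℝ :=
  ∑ i, x i • vS (w (true, i))

/-- `w` is a linear extension of `P`: a signed permutation with `P ⊆ w(Φ⁺_{B_n})`. -/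
def IsLinExt {n : ℕ} (P : Set (Fin n → ℝ)) (w : SIdx n ≃ SIdx n) : Prop :=
  IsSPerm w ∧ ∀ α ∈ P, ∃ β ∈ BnPos n, α = spAct w β

/-- The (finite) set `𝓛(P)` of linear extensions of `P`. -/
def linExts (n : ℕ) (P : Set (Fin n → ℝ)) : Finset (SIdx n ≃ SIdx n) :=
  Finset.univ.filter (IsLinExt P)

/-- Simple roots of `Φ_{B_n}`: `α_i = e_i - e_{i+1}` for `i < n - 1`, `α_{n-1} = e_{n-1}`
(0-indexed). -/
def simpleRoot (n : ℕ) (i : Fin n) : Fin n → ℝ := fun j =>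
  (if j = i then (1 : ℝ) else 0) - if (j : ℕ) = (i : ℕ) + 1 then 1 else 0

/-- `J^w_m = {w(1), …, w(m)}` (0-indexed: the images under `w` of `+1, …, +(m+1)`). -/
def JwSet {n : ℕ} (w : SIdx n ≃ SIdx n) (m : Fin n) : Finset (SIdx n) :=
  (Finset.univ.filter (fun j : Fin n => j ≤ m)).image (fun j => w (true, j))

/-- An extensible ideal of `P`. -/
def Extensible (n : ℕ) (P : Set (Fin n → ℝ)) (J : Finset (SIdx n)) : Prop :=
  ∃ I : Finset (SIdx n), I.Nonempty ∧ Disjoint I J ∧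
    IsIdeal P (J ∪ I) ∧ IsIdeal P (J ∪ I.image negS)

/-- The finite set `J_conn(P)` of connected ideals of `P`. -/
def JconnF (n : ℕ) (P : Set (Fin n → ℝ)) : Finset (Finset (SIdx n)) :=
  Finset.univ.filter (IsConnIdeal P)

/-- Membership in `Π(P)`: an unordered pair of nontrivially intersecting connected ideals. -/
def inPiP {n : ℕ} (P : Set (Fin n → ℝ)) (p : Sym2 (Finset (SIdx n))) : Prop :=
  ∃ J K : Finset (SIdx n),
    p = s(J, K) ∧ IsConnIdeal P J ∧ IsConnIdeal P K ∧ NontrivInter J K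

/-- The finite set `Π(P)` of unordered pairs of nontrivially intersecting connected ideals. -/
def PiP (n : ℕ) (P : Set (Fin n → ℝ)) : Finset (Sym2 (Finset (SIdx n))) :=
  Finset.univ.filter (inPiP P)

/-- No connected ideal of `P` intersects two or more other connected ideals nontrivially. -/
def NoDoubleNontriv (n : ℕ) (P : Set (Fin n → ℝ)) : Prop :=
  ∀ J K K' : Finset (SIdx n), IsConnIdeal P J → IsConnIdeal P K → IsConnIdeal P K' →
    NontrivInter J K → NontrivInter J K' → K = K'

/-- The connected component of `a` inside `J` (w.r.t. the Fischer comparability graph). -/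
def componentIn {n : ℕ} (P : Set (Fin n → ℝ)) (J : Finset (SIdx n)) (a : SIdx n) :
    Finset (SIdx n) :=
  J.filter (fun b => Relation.ReflTransGen (connStep P J) a b)

/-- The set of connected components of `J`. -/
def componentsOf {n : ℕ} (P : Set (Fin n → ℝ)) (J : Finset (SIdx n)) :
    Finset (Finset (SIdx n)) :=
  J.image (componentIn P J)

/-- The signed support `supp±(f) = {sgn(f_i)·i : f_i ≠ 0}` of a vector `f ∈ ℝ^n`. -/
def suppPM {n : ℕ} (f : Fin n → ℝ) : Finset (SIdx n) :=
  Finset.univ.filter (fun a : SIdx n => if a.1 then 0 < f a.2 else f a.2 < 0)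

/-- Index type for the variables `U_J`, `J` a connected ideal of `P`. -/
abbrev ConnIdx (n : ℕ) (P : Set (Fin n → ℝ)) := {J : Finset (SIdx n) // IsConnIdeal P J}

/-- Integer signed characteristic vector, as an exponent vector for Laurent monomials. -/
def chiZ {n : ℕ} (J : Finset (SIdx n)) : Fin n →₀ ℤ :=
  Finsupp.equivFunOnFinite.symm (fun i =>
    if (true, i) ∈ J then 1 else if (false, i) ∈ J then -1 else 0)

/-- The map `φ : k[U_J : J ∈ J_conn(P)] → k[x_1^{±1}, …, x_n^{±1}]`, `U_J ↦ x^{χ_J}`. -/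
def phiWt (n : ℕ) (P : Set (Fin n → ℝ)) (k : Type) [Field k] :
    MvPolynomial (ConnIdx n P) k →ₐ[k] AddMonoidAlgebra k (Fin n →₀ ℤ) :=
  MvPolynomial.aeval (fun J => AddMonoidAlgebra.single (chiZ J.val) 1)

/-- The binomial `syz(U_J, U_K) = U_J U_K - (∏_A U_A) (∏_B U_B)`, where `A` runs over the
connected components of `J ∩ K` and `B` over the connected components of `supp±(χ_J + χ_K)`. -/
def syzPoly (n : ℕ) (P : Set (Fin n → ℝ)) (k : Type) [Field k] (J K : ConnIdx n P) :
    MvPolynomial (ConnIdx n P) k :=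
  MvPolynomial.X J * MvPolynomial.X K -
    (∏ A ∈ Finset.univ.filter
        (fun A : ConnIdx n P => (A : Finset (SIdx n)) ∈ componentsOf P (J.val ∩ K.val)),
        MvPolynomial.X A) *
      ∏ B ∈ Finset.univ.filter
        (fun B : ConnIdx n P =>
          (B : Finset (SIdx n)) ∈ componentsOf P (suppPM (chiF J.val + chiF K.val))),
        MvPolynomial.X B

/-- `θ_1, …, θ_r` is a regular sequence: the ideal it generates is proper, and each `θ_{m+1}`
is a non-zero-divisor modulo the ideal generated by `θ_1, …, θ_m`. -/
def IsRegSeq {R : Type} [CommRing R] {r : ℕ} (θ : Fin r → R) : Prop :=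
  Ideal.span (Set.range θ) ≠ ⊤ ∧
    ∀ (m : ℕ) (hm : m < r) (x : R),
      θ ⟨m, hm⟩ * x ∈ Ideal.span (θ '' {j : Fin r | (j : ℕ) < m}) →
        x ∈ Ideal.span (θ '' {j : Fin r | (j : ℕ) < m})

/-- The induced signed poset `P_A = P ∩ span_ℝ{e_i : i ∈ A}`. -/
def inducedPoset (n : ℕ) (P : Set (Fin n → ℝ)) (A : Finset (Fin n)) : Set (Fin n → ℝ) :=
  {α | α ∈ P ∧ α ∈ Submodule.span ℝ (stdB n '' (A : Set (Fin n)))}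

/-- The major index of a signed permutation. -/
def majB {n : ℕ} (w : SIdx n ≃ SIdx n) : ℕ :=
  ∑ i ∈ Finset.univ.filter
      (fun i : Fin n => spAct w (simpleRoot n i) ∉ BnPos n), ((i : ℕ) + 1)

/-- `[m]_q = 1 + q + ⋯ + q^{m-1}` in `ℤ[q]`. -/
def qInt (m : ℕ) : Polynomial ℤ := ∑ t ∈ Finset.range m, Polynomial.X ^ t

/-- The symmetric function `{J, K} ↦ ⟨x, χ_J + χ_K⟩` on unordered pairs. -/
def pairDot {n : ℕ} (x : Fin n → ℝ) : Sym2 (Finset (SIdx n)) → ℝ :=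
  Sym2.lift ⟨fun J K => dotR x (chiF J + chiF K),
    fun J K => congrArg (dotR x) (add_comm (chiF J) (chiF K))⟩

/-- The symmetric function `{J, K} ↦ [|J| + |K|]_q` on unordered pairs. -/
def pairQ {n : ℕ} : Sym2 (Finset (SIdx n)) → Polynomial ℤ :=
  Sym2.lift ⟨fun J K => qInt (J.card + K.card),
    fun J K => congrArg qInt (Nat.add_comm J.card K.card)⟩

/-- The principal order ideal `I_≤(a)` in the Fischer order restricted to `±[n]`. -/
def Ile {n : ℕ} (P : Set (Fin n → ℝ)) (a : SIdx n) : Set (SIdx n) :=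
  {b | b = a ∨ fLT P (some b) (some a)}

/-- A set of signed indices is isotropic if it contains no pair `{i, -i}`. -/
def IsoSet {n : ℕ} (S : Set (SIdx n)) : Prop :=
  ∀ i : Fin n, ¬((true, i) ∈ S ∧ (false, i) ∈ S)

/-- A covering pair of the Fischer order of `P`. -/
def CovPair {n : ℕ} (P : Set (Fin n → ℝ)) (a b : Option (SIdx n)) : Prop :=
  fLT P a b ∧ ¬∃ c : Option (SIdx n), fLT P a c ∧ fLT P c b

/-- The set of covering roots of `P`. -/
def covRoots {n : ℕ} (P : Set (Fin n → ℝ)) : Set (Fin n → ℝ) :=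
  {x | ∃ a b : Option (SIdx n), CovPair P a b ∧ x = vO a - vO b}

/-- The set `J_ε = {i : ε_i = 1} ∪ {-i : ε_i = -1}` attached to a `{-1,0,1}`-vector. -/
def Jeps {n : ℕ} (ε : Fin n → ℝ) : Set (SIdx n) :=
  {a | (a.1 = true ∧ ε a.2 = 1) ∨ (a.1 = false ∧ ε a.2 = -1)}

open MeasureTheory

namespace SP

lemma rsgn_mul_self (s : Bool) : rsgn s * rsgn s = 1 := by cases s <;> simp [rsgn]
lemma rsgn_not (s : Bool) : rsgn (!s) = - rsgn s := by cases s <;> simp [rsgn]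
lemma abs_rsgn (s : Bool) : |rsgn s| = 1 := by cases s <;> simp [rsgn]

lemma vS_apply {n : ℕ} (a : SIdx n) (i : Fin n) : vS a i = if i = a.2 then rsgn a.1 else 0 := by
  simp [vS, stdB, Pi.single_apply]

lemma vS_neg {n : ℕ} (a : SIdx n) : vS (negS a) = - vS a := by
  ext i; simp only [vS_apply, negS, rsgn_not, Pi.neg_apply]; split_ifs <;> simp

lemma dot_vS {n : ℕ} (u : Fin n → ℝ) (a : SIdx n) : dotR u (vS a) = rsgn a.1 * u a.2 := by
  simp [dotR, vS_apply, mul_comm]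

lemma dot_add {n : ℕ} (u a b : Fin n → ℝ) : dotR u (a + b) = dotR u a + dotR u b := by
  simp [dotR, mul_add, Finset.sum_add_distrib]

lemma dot_smul {n : ℕ} (u a : Fin n → ℝ) (c : ℝ) : dotR u (c • a) = c * dotR u a := by
  simp only [dotR, Finset.mul_sum, Pi.smul_apply, smul_eq_mul]
  exact Finset.sum_congr rfl fun i _ => by ring

lemma dot_comm {n : ℕ} (u a : Fin n → ℝ) : dotR u a = dotR a u := by
  simp [dotR, mul_comm]

lemma dot_sum {n : ℕ} {ι : Type*} (s : Finset ι) (u : Fin n → ℝ) (a : ι → Fin n → ℝ) :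
    dotR u (∑ i ∈ s, a i) = ∑ i ∈ s, dotR u (a i) := by
  simp only [dotR, Finset.sum_apply, Finset.mul_sum]
  exact Finset.sum_comm

/-- underlying unsigned map -/
def sg {n : ℕ} (w : SIdx n ≃ SIdx n) (i : Fin n) : Fin n := (w (true, i)).2

lemma sg_inj {n : ℕ} {w : SIdx n ≃ SIdx n} (hw : IsSPerm w) : Function.Injective (sg w) := by
  intro i j h
  by_cases h1 : (w (true, i)).1 = (w (true, j)).1
  · have := w.injective (Prod.ext h1 h)
    simpa using this
  · have h2 : w (true, i) = negS (w (true, j)) := by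
      refine Prod.ext ?_ h
      simp only [negS]
      revert h1
      cases (w (true, i)).1 <;> cases (w (true, j)).1 <;> simp
    rw [← hw] at h2
    have := w.injective h2
    simp [negS] at this

lemma sg_surj {n : ℕ} {w : SIdx n ≃ SIdx n} (hw : IsSPerm w) : Function.Surjective (sg w) :=
  Finite.surjective_of_injective (sg_inj hw)

lemma spAct_apply {n : ℕ} {w : SIdx n ≃ SIdx n} (hw : IsSPerm w) (x : Fin n → ℝ) (k : Fin n) :
    spAct w x (sg w k) = rsgn (w (true, k)).1 * x k := by
  simp only [spAct, Finset.sum_apply, Pi.smul_apply, vS_apply, smul_eq_mul]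
  rw [Finset.sum_eq_single k]
  · simp [sg, mul_comm]
  · intro b _ hb
    have : sg w k ≠ (w (true, b)).2 := fun h => hb (sg_inj hw h).symm
    simp [this]
  · simp

lemma spAct_dot {n : ℕ} {w : SIdx n ≃ SIdx n} (hw : IsSPerm w) (x y : Fin n → ℝ) :
    dotR (spAct w x) (spAct w y) = dotR x y := by
  unfold dotR
  rw [← (Equiv.ofBijective _ ⟨sg_inj hw, sg_surj hw⟩).sum_comp]
  refine Finset.sum_congr rfl fun k _ => ?_
  show spAct w x (sg w k) * spAct w y (sg w k) = _
  rw [spAct_apply hw, spAct_apply hw]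
  linear_combination (x k * y k) * rsgn_mul_self (w (true, k)).1

lemma spAct_vS {n : ℕ} {w : SIdx n ≃ SIdx n} (hw : IsSPerm w) (a : SIdx n) :
    spAct w (vS a) = vS (w a) := by
  have h1 : ∀ i, spAct w (vS (true, i)) = vS (w (true, i)) := by
    intro i
    simp [spAct, vS_apply, rsgn]
  obtain ⟨b, i⟩ := a
  cases b
  · have h : ((false, i) : SIdx n) = negS (true, i) := rfl
    rw [h, hw, vS_neg, vS_neg, ← h1]
    simp [spAct]
  · exact h1 i

lemma spAct_add {n : ℕ} (w : SIdx n ≃ SIdx n) (x y : Fin n → ℝ) :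
    spAct w (x + y) = spAct w x + spAct w y := by
  simp [spAct, add_smul, Finset.sum_add_distrib]

lemma mem_roots_iff {n : ℕ} (α : Fin n → ℝ) : α ∈ BnRoots n ↔
    (∃ a b : SIdx n, a.2 ≠ b.2 ∧ α = vS a + vS b) ∨ ∃ a : SIdx n, α = vS a := by
  constructor
  · rintro (⟨i, j, hij, s, t, rfl⟩ | ⟨i, s, rfl⟩)
    · exact Or.inl ⟨(s, i), (t, j), hij.ne, rfl⟩
    · exact Or.inr ⟨(s, i), rfl⟩
  · rintro (⟨a, b, hab, rfl⟩ | ⟨a, rfl⟩)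
    · rcases lt_or_gt_of_ne hab with h | h
      · exact Or.inl ⟨a.2, b.2, h, a.1, b.1, rfl⟩
      · exact Or.inl ⟨b.2, a.2, h, b.1, a.1, by rw [add_comm]; rfl⟩
    · exact Or.inr ⟨a.2, a.1, rfl⟩

lemma pos_dot {n : ℕ} {u : Fin n → ℝ} (hu : StrictAnti u) (h0 : ∀ i, 0 < u i)
    {β : Fin n → ℝ} (hβ : β ∈ BnPos n) : 0 < dotR u β := by
  rcases hβ with ⟨i, j, hij, t, rfl⟩ | ⟨i, rfl⟩
  · have e : stdB n i + rsgn t • stdB n j = vS (true, i) + vS (t, j) := by simp [vS, rsgn]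
    rw [e, dot_add, dot_vS, dot_vS]
    have := hu hij
    have := h0 j
    have := h0 i
    cases t <;> simp [rsgn] <;> linarith
  · have e : stdB n i = vS (true, i) := by simp [vS, rsgn]
    rw [e, dot_vS]; simpa [rsgn] using h0 i

lemma pos_dot_weak {n : ℕ} {u : Fin n → ℝ} (hu : Antitone u) (h0 : ∀ i, 0 ≤ u i)
    {β : Fin n → ℝ} (hβ : β ∈ BnPos n) : 0 ≤ dotR u β := by
  rcases hβ with ⟨i, j, hij, t, rfl⟩ | ⟨i, rfl⟩
  · have e : stdB n i + rsgn t • stdB n j = vS (true, i) + vS (t, j) := by simp [vS, rsgn]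
    rw [e, dot_add, dot_vS, dot_vS]
    have := hu hij.le
    have := h0 j
    have := h0 i
    cases t <;> simp [rsgn] <;> linarith
  · have e : stdB n i = vS (true, i) := by simp [vS, rsgn]
    rw [e, dot_vS]; simpa [rsgn] using h0 i

lemma mem_pos_aux {n : ℕ} {u : Fin n → ℝ} (hu : StrictAnti u) (h0 : ∀ i, 0 < u i)
    (a b : SIdx n) (hab : a.2 < b.2) (h : 0 ≤ dotR u (vS a + vS b)) :
    vS a + vS b ∈ BnPos n := by
  obtain ⟨s, i⟩ := a
  obtain ⟨t, j⟩ := b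
  cases s
  · exfalso
    rw [dot_add, dot_vS, dot_vS] at h
    have := hu hab
    have := h0 j
    have := h0 i
    cases t <;> simp [rsgn] at h this <;> simp at * <;> linarith
  · exact Or.inl ⟨i, j, hab, t, by simp [vS, rsgn]⟩

lemma mem_pos {n : ℕ} {u : Fin n → ℝ} (hu : StrictAnti u) (h0 : ∀ i, 0 < u i)
    {β : Fin n → ℝ} (hβ : β ∈ BnRoots n) (h : 0 ≤ dotR u β) : β ∈ BnPos n := by
  rw [mem_roots_iff] at hβ
  rcases hβ with ⟨a, b, hab, rfl⟩ | ⟨⟨s, i⟩, rfl⟩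
  · rcases lt_or_gt_of_ne hab with h' | h'
    · exact mem_pos_aux hu h0 a b h' h
    · rw [add_comm] at h ⊢
      exact mem_pos_aux hu h0 b a h' h
  · cases s
    · rw [dot_vS] at h
      have := h0 i
      simp [rsgn] at h; linarith
    · exact Or.inr ⟨i, by simp [vS, rsgn]⟩

lemma root_pull {n : ℕ} {w : SIdx n ≃ SIdx n} (hw : IsSPerm w) {α : Fin n → ℝ}
    (hα : α ∈ BnRoots n) : ∃ β ∈ BnRoots n, α = spAct w β := by
  rw [mem_roots_iff] at hα
  rcases hα with ⟨a, b, hab, rfl⟩ | ⟨a, rfl⟩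
  · refine ⟨vS (w.symm a) + vS (w.symm b), (mem_roots_iff _).2 (Or.inl ⟨_, _, ?_, rfl⟩), ?_⟩
    · intro h
      have := congrArg (sg w) h
      apply hab
      have h1 : ∀ a : SIdx n, (w a).2 = sg w a.2 := by
        rintro ⟨s, i⟩
        cases s
        · have h : ((false, i) : SIdx n) = negS (true, i) := rfl
          rw [h, hw]; rfl
        · rfl
      rw [← h1, ← h1] at this
      simpa using this
    · rw [spAct_add, spAct_vS hw, spAct_vS hw]; simp
  · refine ⟨vS (w.symm a), (mem_roots_iff _).2 (Or.inr ⟨_, rfl⟩), ?_⟩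
    rw [spAct_vS hw]; simp

/-- open chamber -/
def Ch {n : ℕ} (w : SIdx n ≃ SIdx n) : Set (Fin n → ℝ) :=
  {f | ∃ u : Fin n → ℝ, StrictAnti u ∧ (∀ i, 0 < u i) ∧ f = spAct w u}

lemma Ch_subset {n : ℕ} {P : Set (Fin n → ℝ)} {w : SIdx n ≃ SIdx n} (hw : IsLinExt P w) :
    Ch w ⊆ weightCone P := by
  rintro f ⟨u, hu, h0, rfl⟩ α hα
  obtain ⟨β, hβ, rfl⟩ := hw.2 α hα
  rw [spAct_dot hw.1]
  exact (pos_dot hu h0 hβ).le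

lemma linExt_of_mem {n : ℕ} {P : Set (Fin n → ℝ)} (hP : P ⊆ BnRoots n) {w : SIdx n ≃ SIdx n}
    (hw : IsSPerm w) {f : Fin n → ℝ} (hf : f ∈ Ch w) (hfP : f ∈ weightCone P) :
    IsLinExt P w := by
  refine ⟨hw, fun α hα => ?_⟩
  obtain ⟨β, hβ, rfl⟩ := root_pull hw (hP hα)
  obtain ⟨u, hu, h0, rfl⟩ := hf
  have := hfP _ hα
  rw [spAct_dot hw] at this
  exact ⟨β, mem_pos hu h0 hβ this, rfl⟩

lemma Ch_disj {n : ℕ} {w w' : SIdx n ≃ SIdx n} (hw : IsSPerm w) (hw' : IsSPerm w')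
    {f : Fin n → ℝ} (hf : f ∈ Ch w) (hf' : f ∈ Ch w') : w = w' := by
  obtain ⟨u, hu, h0, rfl⟩ := hf
  obtain ⟨u', hu', h0', he⟩ := hf'
  set f := spAct w u with hf
  have e1 : ∀ k, f (sg w k) = rsgn (w (true, k)).1 * u k := spAct_apply hw u
  have e2 : ∀ k, f (sg w' k) = rsgn (w' (true, k)).1 * u' k := by
    rw [he]; exact spAct_apply hw' u'
  have a1 : ∀ k, |f (sg w k)| = u k := fun k => by
    rw [e1, abs_mul, abs_rsgn, one_mul, abs_of_pos (h0 k)]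
  have a2 : ∀ k, |f (sg w' k)| = u' k := fun k => by
    rw [e2, abs_mul, abs_rsgn, one_mul, abs_of_pos (h0' k)]
  have hs : sg w = sg w' := by
    let σ : Equiv.Perm (Fin n) := Equiv.ofBijective _ ⟨sg_inj hw, sg_surj hw⟩
    let τ : Equiv.Perm (Fin n) := Equiv.ofBijective _ ⟨sg_inj hw', sg_surj hw'⟩
    have c1 : (fun i => |f i|) ∘ σ = u := funext a1
    have c2 : (fun i => |f i|) ∘ τ = u' := funext a2
    have key : (fun i => |f i|) ∘ σ = (fun i => |f i|) ∘ τ :=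
      Tuple.unique_antitone (by rw [c1]; exact hu.antitone) (by rw [c2]; exact hu'.antitone)
    have inj : Function.Injective (fun i => |f i|) := by
      intro i j hij
      obtain ⟨i, rfl⟩ := sg_surj hw i
      obtain ⟨j, rfl⟩ := sg_surj hw j
      simp only [a1] at hij
      rw [hu.injective hij]
    funext k
    exact inj (congrFun key k)
  have h1 : ∀ k, w (true, k) = w' (true, k) := by
    intro k
    refine Prod.ext ?_ (congrFun hs k)
    have := e1 k
    rw [hs, e2] at this
    have p := h0 k
    have p' := h0' k
    revert this
    cases (w (true, k)).1 <;> cases (w' (true, k)).1 <;> simp [rsgn] <;> intro h <;> linarith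
  ext1 ⟨s, k⟩
  cases s
  · have h : ((false, k) : SIdx n) = negS (true, k) := rfl
    rw [h, hw, hw', h1]
  · exact h1 k

lemma exists_Ch {n : ℕ} (f : Fin n → ℝ) (hf : ∀ α ∈ BnRoots n, dotR f α ≠ 0) :
    ∃ w : SIdx n ≃ SIdx n, IsSPerm w ∧ f ∈ Ch w := by
  have hne : ∀ i, f i ≠ 0 := by
    intro i hi
    apply hf (vS (true, i)) ((mem_roots_iff _).2 (Or.inr ⟨_, rfl⟩))
    rw [dot_vS]; simp [hi]
  have hinj : ∀ i j, |f i| = |f j| → i = j := by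
    intro i j hij
    by_contra h
    rcases abs_eq_abs.1 hij with h1 | h1
    · apply hf (vS (true, i) + vS (false, j)) ((mem_roots_iff _).2 (Or.inl ⟨_, _, h, rfl⟩))
      rw [dot_add, dot_vS, dot_vS]; simp [h1, rsgn]
    · apply hf (vS (true, i) + vS (true, j)) ((mem_roots_iff _).2 (Or.inl ⟨_, _, h, rfl⟩))
      rw [dot_add, dot_vS, dot_vS]; simp [h1, rsgn]
  let σ := Tuple.sort (fun i => -|f i|)
  have hσ : Monotone ((fun i => -|f i|) ∘ σ) := Tuple.monotone_sort _
  let g : SIdx n → SIdx n := fun a => (if 0 < f (σ a.2) then a.1 else !a.1, σ a.2)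
  have hg : Function.Injective g := by
    rintro ⟨s, i⟩ ⟨t, j⟩ h
    have h3 : σ i = σ j := (Prod.ext_iff.1 h).2
    have h2 : i = j := σ.injective h3
    subst h2
    have h1 := congrArg Prod.fst h
    simp only [g] at h1
    split_ifs at h1 <;> simp_all
  let w : SIdx n ≃ SIdx n := Equiv.ofBijective g (Finite.injective_iff_bijective.1 hg)
  have hwa : ∀ a, w a = g a := fun a => rfl
  have hw : IsSPerm w := by
    rintro ⟨s, i⟩
    simp only [hwa, g, negS]
    split_ifs <;> rfl
  refine ⟨w, hw, fun i => |f (σ i)|, ?_, fun i => abs_pos.2 (hne _), ?_⟩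
  · intro i j hij
    have h1 := hσ hij.le
    simp only [Function.comp] at h1
    refine lt_of_le_of_ne (by linarith) fun h => ?_
    exact hij.ne (σ.injective (hinj _ _ h)).symm
  · funext k
    obtain ⟨k, rfl⟩ := sg_surj hw k
    rw [spAct_apply hw]
    show f (σ k) = rsgn (if 0 < f (σ k) then true else !true) * |f (σ k)|
    split_ifs with h
    · simp [rsgn, abs_of_pos h]
    · simp [rsgn, abs_of_nonpos (not_lt.1 h)]

lemma roots_finite (n : ℕ) : (BnRoots n).Finite := by
  have : BnRoots n ⊆ Set.range (fun p : SIdx n × SIdx n => vS p.1 + vS p.2) ∪ Set.range vS := by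
    intro α hα
    rcases (mem_roots_iff α).1 hα with ⟨a, b, _, rfl⟩ | ⟨a, rfl⟩
    · exact Or.inl ⟨(a, b), rfl⟩
    · exact Or.inr ⟨a, rfl⟩
  exact ((Set.finite_range _).union (Set.finite_range _)).subset this

lemma root_ne_zero {n : ℕ} {α : Fin n → ℝ} (hα : α ∈ BnRoots n) : ∃ i, α i ≠ 0 := by
  rcases (mem_roots_iff α).1 hα with ⟨a, b, hab, rfl⟩ | ⟨a, rfl⟩
  · refine ⟨a.2, ?_⟩
    simp only [Pi.add_apply, vS_apply, hab, if_true, if_false]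
    cases a.1 <;> simp [rsgn]
  · refine ⟨a.2, ?_⟩
    simp only [vS_apply, if_true]
    cases a.1 <;> simp [rsgn]

/-- the linear functional -/
def dotL {n : ℕ} (α : Fin n → ℝ) : (Fin n → ℝ) →ₗ[ℝ] ℝ where
  toFun f := dotR f α
  map_add' a b := by rw [dot_comm, dot_add, dot_comm α, dot_comm α]
  map_smul' c a := by rw [dot_comm, dot_smul, dot_comm α]; rfl

lemma ae_generic (n : ℕ) : ∀ᵐ f : Fin n → ℝ, ∀ α ∈ BnRoots n, dotR f α ≠ 0 := by
  rw [ae_ball_iff (roots_finite n).countable]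
  intro α hα
  obtain ⟨i, hi⟩ := root_ne_zero hα
  have hne : LinearMap.ker (dotL α) ≠ ⊤ := by
    intro h
    have : vS (true, i) ∈ LinearMap.ker (dotL α) := by rw [h]; trivial
    have h2 : dotR (vS (true, i)) α = 0 := this
    rw [dot_comm, dot_vS] at h2
    simp [rsgn] at h2
    exact hi h2
  have := Measure.addHaar_submodule (volume : Measure (Fin n → ℝ)) _ hne
  rw [ae_iff]
  convert this using 2
  ext f
  simp [dotL]

lemma chi_eq {n : ℕ} {w : SIdx n ≃ SIdx n} (hw : IsSPerm w) (m : Fin n) :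
    chiF (JwSet w m) = spAct w (fun j => if j ≤ m then 1 else 0) := by
  funext k
  obtain ⟨k, rfl⟩ := sg_surj hw k
  rw [spAct_apply hw]
  have hmem : ∀ s, (s, sg w k) ∈ JwSet w m ↔ k ≤ m ∧ (w (true, k)).1 = s := by
    intro s
    simp only [JwSet, Finset.mem_image, Finset.mem_filter, Finset.mem_univ, true_and]
    constructor
    · rintro ⟨j, hj, h⟩
      have : j = k := sg_inj hw (Prod.ext_iff.1 h).2
      subst this
      exact ⟨hj, congrArg Prod.fst h⟩
    · rintro ⟨h1, h2⟩
      exact ⟨k, h1, Prod.ext h2 rfl⟩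
  simp only [chiF, hmem]
  by_cases h : k ≤ m <;> cases (w (true, k)).1 <;> simp [h, rsgn]

lemma chi_pos {n : ℕ} {P : Set (Fin n → ℝ)} {x : Fin n → ℝ} (hx : x ∈ interior (rootCone P))
    {w : SIdx n ≃ SIdx n} (hw : IsLinExt P w) (m : Fin n) : 0 < dotR x (chiF (JwSet w m)) := by
  set c := chiF (JwSet w m) with hc
  have hnn : ∀ y ∈ rootCone P, 0 ≤ dotR c y := by
    rintro y ⟨r, a, β, ha, hβ, rfl⟩
    rw [dot_sum]
    refine Finset.sum_nonneg fun i _ => ?_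
    rw [dot_smul]
    refine mul_nonneg (ha i) ?_
    obtain ⟨γ, hγ, e⟩ := hw.2 _ (hβ i)
    rw [e, hc, chi_eq hw.1, spAct_dot hw.1]
    refine pos_dot_weak ?_ ?_ hγ
    · intro i j hij
      dsimp only
      split_ifs with h1 h2 h2
      · exact le_rfl
      · exact absurd (hij.trans h1) h2
      · norm_num
      · exact le_rfl
    · intro i; split_ifs <;> norm_num
  have hcc : 0 < dotR c c := by
    rw [hc, chi_eq hw.1, spAct_dot hw.1]
    unfold dotR
    refine Finset.sum_pos' (fun i _ => mul_self_nonneg _) ⟨m, Finset.mem_univ _, by simp⟩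
  have hcont : Filter.Tendsto (fun ε : ℝ => x + (-ε) • c) (nhds 0) (nhds x) := by
    have : Continuous (fun ε : ℝ => x + (-ε) • c) := by fun_prop
    simpa using this.tendsto 0
  have hev := hcont.eventually (mem_interior_iff_mem_nhds.1 hx)
  obtain ⟨δ, hδ, hball⟩ := Metric.eventually_nhds_iff.1 hev
  have h2 := hball (y := δ / 2) (by
    rw [Real.dist_eq, sub_zero, abs_of_pos (by linarith)]; linarith)
  have h3 := hnn _ h2
  rw [dot_add, dot_smul, dot_comm c x] at h3
  nlinarith

/-- signed permutation matrix -/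
def Mw {n : ℕ} (w : SIdx n ≃ SIdx n) : Matrix (Fin n) (Fin n) ℝ :=
  Matrix.of fun i j => vS (w (true, j)) i

/-- unitriangular matrix -/
def Tm (n : ℕ) : Matrix (Fin n) (Fin n) ℝ := Matrix.of fun i j => if i ≤ j then 1 else 0

lemma Mw_mulVec {n : ℕ} (w : SIdx n ≃ SIdx n) (u : Fin n → ℝ) :
    (Mw w).mulVec u = spAct w u := by
  ext i
  simp [Matrix.mulVec, dotProduct, Mw, spAct, mul_comm]

lemma det_Mw {n : ℕ} {w : SIdx n ≃ SIdx n} (hw : IsSPerm w) : |(Mw w).det| = 1 := by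
  have h : (Mw w).transpose * Mw w = 1 := by
    ext i j
    have : ((Mw w).transpose * Mw w) i j = dotR (vS (w (true, i))) (vS (w (true, j))) := by
      simp [Matrix.mul_apply, Mw, dotR]
    rw [this, ← spAct_vS hw, ← spAct_vS hw, spAct_dot hw, dot_vS, vS_apply, Matrix.one_apply]
    simp [rsgn, eq_comm]
  have h2 := congrArg Matrix.det h
  rw [Matrix.det_mul, Matrix.det_transpose, Matrix.det_one] at h2
  have : |(Mw w).det| * |(Mw w).det| = 1 := by rw [← abs_mul, h2, abs_one]
  nlinarith [abs_nonneg (Mw w).det]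

lemma det_Tm (n : ℕ) : (Tm n).det = 1 := by
  rw [Matrix.det_of_isUpperTriangular]
  · simp [Tm]
  · intro i j hij
    have : ¬ i ≤ j := not_le.2 hij
    simp [Tm, this]

/-- parametrization of the chamber -/
def Bl {n : ℕ} (w : SIdx n ≃ SIdx n) : (Fin n → ℝ) →L[ℝ] (Fin n → ℝ) :=
  LinearMap.toContinuousLinearMap (Matrix.toLin' (Mw w * Tm n))

lemma Bl_apply {n : ℕ} (w : SIdx n ≃ SIdx n) (t : Fin n → ℝ) :
    Bl w t = spAct w ((Tm n).mulVec t) := by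
  simp [Bl, ← Mw_mulVec]

lemma Bl_det {n : ℕ} {w : SIdx n ≃ SIdx n} (hw : IsSPerm w) : |(Bl w).det| = 1 := by
  have : (Bl w).det = (Mw w * Tm n).det := by
    rw [← LinearMap.det_toLin']; rfl
  rw [this, Matrix.det_mul, det_Tm, mul_one, det_Mw hw]

lemma Bl_inj {n : ℕ} {w : SIdx n ≃ SIdx n} (hw : IsSPerm w) : Function.Injective (Bl w) := by
  have h : IsUnit (Mw w * Tm n).det := by
    rw [isUnit_iff_ne_zero, Matrix.det_mul, det_Tm, mul_one]
    intro h
    have := det_Mw hw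
    rw [h] at this
    simp at this
  intro a b hab
  have hab' : (Mw w * Tm n).mulVec a = (Mw w * Tm n).mulVec b := by simpa [Bl] using hab
  exact Matrix.mulVec_injective_iff_isUnit.2 ((Matrix.isUnit_iff_isUnit_det _).2 h) hab'

lemma Tm_mulVec {n : ℕ} (t : Fin n → ℝ) (j : Fin n) :
    (Tm n).mulVec t j = ∑ m, if j ≤ m then t m else 0 := by
  simp [Matrix.mulVec, dotProduct, Tm]

lemma dot_Bl {n : ℕ} {w : SIdx n ≃ SIdx n} (hw : IsSPerm w) (x t : Fin n → ℝ) :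
    dotR x (Bl w t) = ∑ m, dotR x (chiF (JwSet w m)) * t m := by
  have : Bl w t = ∑ m, t m • chiF (JwSet w m) := by
    rw [Bl_apply]
    have h1 : (Tm n).mulVec t = ∑ m, t m • (fun j => if j ≤ m then (1 : ℝ) else 0) := by
      ext j; rw [Tm_mulVec]; simp
    rw [h1, ← Mw_mulVec, Matrix.mulVec_sum]
    refine Finset.sum_congr rfl fun m _ => ?_
    rw [Matrix.mulVec_smul, Mw_mulVec, chi_eq hw]
  rw [this, dot_sum]
  exact Finset.sum_congr rfl fun m _ => by rw [dot_smul, mul_comm]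

lemma tele {n : ℕ} (u : Fin n → ℝ) (hu : StrictAnti u) (h0 : ∀ i, 0 < u i) :
    ∃ t : Fin n → ℝ, (∀ i, 0 < t i) ∧ (Tm n).mulVec t = u := by
  let U : ℕ → ℝ := fun k => if h : k < n then u ⟨k, h⟩ else 0
  have hU : ∀ j : Fin n, U j = u j := fun j => by simp [U]
  refine ⟨fun m => U m - U (m + 1), fun i => ?_, ?_⟩
  · show 0 < U i - U (i + 1)
    rw [hU]
    by_cases h : (i : ℕ) + 1 < n
    · have : u ⟨i + 1, h⟩ < u i := hu (by rw [Fin.lt_def]; simp)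
      simp only [U, h, dif_pos]; linarith
    · simp only [U, h, dif_neg, not_false_eq_true, sub_zero]; exact h0 i
  · funext j
    rw [Tm_mulVec]
    have h1 : (∑ m : Fin n, if j ≤ m then U m - U (m + 1) else 0)
        = ∑ m ∈ Finset.range n, if (j : ℕ) ≤ m then U m - U (m + 1) else 0 := by
      rw [Finset.sum_range]; rfl
    rw [h1, ← Finset.sum_filter]
    have h2 : (Finset.range n).filter (fun m => (j : ℕ) ≤ m) = Finset.Ico (j : ℕ) n := by
      ext m; simp; tauto
    rw [h2]
    have h3 := Finset.sum_Ico_sub (f := fun k => - U k) j.2.le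
    have h4 : ∑ m ∈ Finset.Ico (j : ℕ) n, (U m - U (m + 1)) = U j - U n := by
      have e : ∀ m, U m - U (m + 1) = -U (m + 1) - -U m := fun m => by ring
      simp only [e]
      rw [h3]; ring
    rw [h4, hU]; simp [U]

/-- positive orthant -/
def Orth (n : ℕ) : Set (Fin n → ℝ) := Set.univ.pi fun _ => Set.Ioi 0

lemma Ch_eq {n : ℕ} (w : SIdx n ≃ SIdx n) : Ch w = Bl w '' Orth n := by
  ext f
  constructor
  · rintro ⟨u, hu, h0, rfl⟩
    obtain ⟨t, ht, rfl⟩ := tele u hu h0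
    exact ⟨t, fun i _ => ht i, Bl_apply w t⟩
  · rintro ⟨t, ht, rfl⟩
    have ht' : ∀ i, 0 < t i := fun i => ht i trivial
    refine ⟨(Tm n).mulVec t, ?_, ?_, Bl_apply w t⟩
    · intro i j hij
      rw [Tm_mulVec, Tm_mulVec]
      refine Finset.sum_lt_sum (fun m _ => ?_) ⟨i, Finset.mem_univ _, ?_⟩
      · split_ifs with h1 h2 h2
        · exact le_rfl
        · exact absurd (hij.le.trans h1) h2
        · exact (ht' m).le
        · exact le_rfl
      · simp [not_le.2 hij, ht' i]
    · intro i
      rw [Tm_mulVec]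
      refine Finset.sum_pos' (fun m _ => ?_) ⟨i, Finset.mem_univ _, by simp [ht' i]⟩
      split_ifs
      · exact (ht' m).le
      · exact le_rfl

lemma Orth_meas (n : ℕ) : MeasurableSet (Orth n) :=
  MeasurableSet.univ_pi fun _ => measurableSet_Ioi

lemma Ch_meas {n : ℕ} {w : SIdx n ≃ SIdx n} (hw : IsSPerm w) : MeasurableSet (Ch w) := by
  rw [Ch_eq]
  exact (Orth_meas n).image_of_continuousOn_injOn (Bl w).continuous.continuousOn
    (Bl_inj hw).injOn

lemma orth_int {n : ℕ} (c : Fin n → ℝ) (hc : ∀ m, 0 < c m) :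
    IntegrableOn (fun t : Fin n → ℝ => Real.exp (-∑ m, c m * t m)) (Orth n) ∧
    ∫ t in Orth n, Real.exp (-∑ m, c m * t m) = ∏ m, (c m)⁻¹ := by
  have e : (fun t : Fin n → ℝ => Real.exp (-∑ m, c m * t m)) =
      fun t => ∏ m, Real.exp (-c m * t m) := by
    funext t
    rw [← Real.exp_sum]; simp
  have hr : (volume : Measure (Fin n → ℝ)).restrict (Orth n) =
      Measure.pi fun _ => (volume : Measure ℝ).restrict (Set.Ioi 0) := by
    rw [Orth, volume_pi, Measure.restrict_pi_pi]
  rw [IntegrableOn, e, hr]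
  constructor
  · exact Integrable.fintype_prod (f := fun m t => Real.exp (-c m * t))
      fun m => exp_neg_integrableOn_Ioi 0 (hc m)
  · rw [integral_fintype_prod_eq_prod (f := fun m t => Real.exp (-c m * t))]
    refine Finset.prod_congr rfl fun m _ => ?_
    rw [integral_exp_mul_Ioi (by linarith [hc m])]
    simp

lemma Ch_int {n : ℕ} {w : SIdx n ≃ SIdx n} (hw : IsSPerm w) (x : Fin n → ℝ)
    (hc : ∀ m, 0 < dotR x (chiF (JwSet w m))) :
    IntegrableOn (fun u => Real.exp (-dotR x u)) (Ch w) volume ∧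
    ∫ u in Ch w, Real.exp (-dotR x u) = ∏ m : Fin n, (dotR x (chiF (JwSet w m)))⁻¹ := by
  have hd : ∀ t ∈ Orth n, HasFDerivWithinAt (Bl w) (Bl w) (Orth n) t := fun t _ =>
    (Bl w).hasFDerivWithinAt
  have := orth_int _ hc
  rw [Ch_eq, integrableOn_image_iff_integrableOn_abs_det_fderiv_smul volume (Orth_meas n) hd
    (Bl_inj hw).injOn, integral_image_eq_integral_abs_det_fderiv_smul volume (Orth_meas n) hd
    (Bl_inj hw).injOn]
  simpa only [Bl_det hw, one_smul, dot_Bl hw] using this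

end SP

theorem statement_3 (n : ℕ) (hn : 1 ≤ n) (P : Set (Fin n → ℝ)) (hP : IsSignedPoset n P)
    (x : Fin n → ℝ) (hx : x ∈ interior (rootCone P)) :
    (∀ w ∈ linExts n P, ∀ m : Fin n, 0 < dotR x (chiF (JwSet w m))) ∧
    IntegrableOn (fun u => Real.exp (-dotR x u)) (weightCone P) volume ∧
    ∫ u in weightCone P, Real.exp (-dotR x u) =
      ∑ w ∈ linExts n P, ∏ m : Fin n, (dotR x (chiF (JwSet w m)))⁻¹ := by
  have hL : ∀ w, w ∈ linExts n P ↔ IsLinExt P w := fun w => by simp [linExts]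
  have hpos : ∀ w ∈ linExts n P, ∀ m : Fin n, 0 < dotR x (chiF (JwSet w m)) :=
    fun w hw m => SP.chi_pos hx ((hL w).1 hw) m
  have hae : weightCone P =ᵐ[volume] ⋃ w ∈ linExts n P, SP.Ch w := by
    filter_upwards [SP.ae_generic n] with f hf
    apply propext
    show f ∈ weightCone P ↔ f ∈ ⋃ w ∈ linExts n P, SP.Ch w
    simp only [Set.mem_iUnion, exists_prop]
    constructor
    · intro h
      obtain ⟨w, hw, hfw⟩ := SP.exists_Ch f hf
      exact ⟨w, (hL w).2 (SP.linExt_of_mem hP.1 hw hfw h), hfw⟩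
    · rintro ⟨w, hw, hfw⟩
      exact SP.Ch_subset ((hL w).1 hw) hfw
  have hChInt : ∀ w ∈ linExts n P, _ := fun w hw =>
    SP.Ch_int ((hL w).1 hw).1 x (hpos w hw)
  refine ⟨hpos, ?_, ?_⟩
  · rw [integrableOn_congr_set_ae hae, integrableOn_finset_iUnion]
    exact fun w hw => (hChInt w hw).1
  · rw [setIntegral_congr_set hae, integral_biUnion_finset]
    · exact Finset.sum_congr rfl fun w hw => (hChInt w hw).2
    · exact fun w hw => SP.Ch_meas ((hL w).1 hw).1
    · intro w hw w' hw' hne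
      refine Set.disjoint_left.2 fun f h1 h2 => hne ?_
      exact SP.Ch_disj ((hL w).1 hw).1 ((hL w').1 hw').1 h1 h2
    · exact fun w hw => (hChInt w hw).1
end
end

section
/- Let P ⊆ Φ_{B_n} be a signed poset whose ℝ-linear span is a proper subspace of ℝ^n. Then both associated rational-function sums vanish identically: (1) for every x ∈ ℝ^n with ⟨x, w(α_i)⟩ ≠ 0 for all w ∈ 𝓛(P) and all 1 ≤ i ≤ n, one has Σ_{w ∈ 𝓛(P)} ∏_{i=1}^n ⟨x, w(α_i)⟩^{−1} = 0; and (2) for every x ∈ ℝ^n with ⟨x, χ_{J^w_m}⟩ ≠ 0 for all w ∈ 𝓛(P) and all 1 ≤ m ≤ n, one has Σ_{w ∈ 𝓛(P)} ∏_{m=1}^n ⟨x, χ_{J^w_m}⟩^{−1} = 0. -/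
open scoped Classical

noncomputable section

/-! ### Auxiliary material -/

/-- The `i`-th simple reflection, as a signed permutation. -/
def sg {n : ℕ} (i : Fin n) : SIdx n ≃ SIdx n where
  toFun a := if h : (i : ℕ) + 1 < n then (a.1, Equiv.swap i ⟨i + 1, h⟩ a.2)
    else if a.2 = i then (!a.1, a.2) else a
  invFun a := if h : (i : ℕ) + 1 < n then (a.1, Equiv.swap i ⟨i + 1, h⟩ a.2)
    else if a.2 = i then (!a.1, a.2) else a
  left_inv a := by
    rcases a with ⟨s, j⟩
    by_cases h : (i : ℕ) + 1 < n
    · simp [h]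
    · by_cases hj : j = i <;> simp [h, hj]
  right_inv a := by
    rcases a with ⟨s, j⟩
    by_cases h : (i : ℕ) + 1 < n
    · simp [h]
    · by_cases hj : j = i <;> simp [h, hj]

lemma sg_pos {n : ℕ} (i : Fin n) (h : (i : ℕ) + 1 < n) (a : SIdx n) :
    sg i a = (a.1, Equiv.swap i ⟨i + 1, h⟩ a.2) := by
  simp [sg, h]

lemma sg_last {n : ℕ} (i : Fin n) (h : ¬ (i : ℕ) + 1 < n) (a : SIdx n) :
    sg i a = if a.2 = i then (!a.1, a.2) else a := by
  simp [sg, h]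

lemma sg_sg {n : ℕ} (i : Fin n) (a : SIdx n) : sg i (sg i a) = a := (sg i).left_inv a

lemma sg_neg {n : ℕ} (i : Fin n) (a : SIdx n) : sg i (negS a) = negS (sg i a) := by
  by_cases h : (i : ℕ) + 1 < n
  · simp [sg_pos i h, negS]
  · by_cases hj : a.2 = i <;> simp [sg_last i h, negS, hj]

lemma vS_negS {n : ℕ} (a : SIdx n) : vS (negS a) = - vS a := by
  rcases a with ⟨s, j⟩
  cases s <;> simp [vS, negS, rsgn]

lemma dotR_eq {n : ℕ} (x y : Fin n → ℝ) : dotR x y = x ⬝ᵥ y := rfl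

lemma spAct_add {n : ℕ} (w : SIdx n ≃ SIdx n) (x y : Fin n → ℝ) :
    spAct w (x + y) = spAct w x + spAct w y := by
  simp [spAct, add_smul, Finset.sum_add_distrib]

lemma spAct_smul {n : ℕ} (w : SIdx n ≃ SIdx n) (c : ℝ) (x : Fin n → ℝ) :
    spAct w (c • x) = c • spAct w x := by
  simp [spAct, Finset.smul_sum, smul_smul]

lemma spAct_stdB {n : ℕ} (w : SIdx n ≃ SIdx n) (i : Fin n) :
    spAct w (stdB n i) = vS (w (true, i)) := by
  simp only [spAct, stdB]
  rw [Finset.sum_eq_single i]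
  · simp
  · intro j _ hj; simp [Pi.single_apply, hj]
  · simp

lemma spAct_vS {n : ℕ} {w : SIdx n ≃ SIdx n} (hw : IsSPerm w) (a : SIdx n) :
    spAct w (vS a) = vS (w a) := by
  rcases a with ⟨s, j⟩
  cases s
  · have h : ((false, j) : SIdx n) = negS (true, j) := rfl
    rw [h, vS_negS, hw, vS_negS, ← spAct_stdB, ← neg_one_smul ℝ (vS _), spAct_smul]
    simp [vS, rsgn]
  · rw [← spAct_stdB]; simp [vS, rsgn]

lemma spAct_sum {n : ℕ} (w : SIdx n ≃ SIdx n) {ι : Type} (s : Finset ι) (f : ι → Fin n → ℝ) :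
    spAct w (∑ i ∈ s, f i) = ∑ i ∈ s, spAct w (f i) := by
  induction s using Finset.induction_on with
  | empty => simp [spAct]
  | insert a s ha ih => rw [Finset.sum_insert ha, Finset.sum_insert ha, spAct_add, ih]

lemma spAct_trans {n : ℕ} {w : SIdx n ≃ SIdx n} (hw : IsSPerm w) (i : Fin n) (x : Fin n → ℝ) :
    spAct ((sg i).trans w) x = spAct w (spAct (sg i) x) := by
  have h : spAct (sg i) x = ∑ j, x j • vS (sg i (true, j)) := rfl
  rw [h, spAct_sum]
  simp only [spAct_smul, spAct_vS hw]
  rfl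

/-- coroot functional -/
def cfun {n : ℕ} (i : Fin n) (y : Fin n → ℝ) : ℝ :=
  if h : (i : ℕ) + 1 < n then y i - y ⟨i + 1, h⟩ else 2 * y i

lemma spAct_sg {n : ℕ} (i : Fin n) (y : Fin n → ℝ) :
    spAct (sg i) y = y - cfun i y • simpleRoot n i := by
  have key : ∀ w : SIdx n ≃ SIdx n, ∀ k, spAct w y k =
      ∑ j, y j * (rsgn (w (true, j)).1 * if k = (w (true, j)).2 then 1 else 0) := by
    intro w k
    simp [spAct, vS, stdB, Pi.single_apply]
  funext k
  rw [key]
  by_cases h : (i : ℕ) + 1 < n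
  · simp only [sg_pos i h, cfun, h, dif_pos]
    have : ∀ j, (k = Equiv.swap i ⟨i + 1, h⟩ j) ↔ j = Equiv.swap i ⟨i + 1, h⟩ k := by
      intro j
      constructor
      · rintro rfl; simp
      · rintro rfl; simp
    simp only [this]
    simp only [rsgn, if_true, one_mul, mul_ite, mul_one, mul_zero, Finset.sum_ite_eq',
      Finset.mem_univ, simpleRoot, Pi.sub_apply, Pi.smul_apply, smul_eq_mul]
    rcases eq_or_ne k i with rfl | hk
    · simp
    · by_cases hk2 : k = ⟨i + 1, h⟩
      · subst hk2; simp [hk]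
      · rw [Equiv.swap_apply_of_ne_of_ne hk hk2]
        have : ¬ (k : ℕ) = i + 1 := fun e => hk2 (Fin.ext e)
        simp [hk, this]
  · simp only [sg_last i h, cfun, h, dif_neg, not_false_eq_true]
    have h2 : ∀ k : Fin n, ¬ (k : ℕ) = i + 1 := by intro k; omega
    rw [Finset.sum_eq_single k]
    · by_cases hk : k = i
      · subst hk; simp [rsgn, simpleRoot]; ring
      · simp [rsgn, simpleRoot, hk, h2]
    · intro b _ hb
      by_cases hk : b = i
      · subst hk; simp [hb.symm]
      · simp [hk, hb.symm]
    · simp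

lemma cfun_simple {n : ℕ} (i : Fin n) : cfun i (simpleRoot n i) = 2 := by
  by_cases h : (i : ℕ) + 1 < n
  · have : (⟨i + 1, h⟩ : Fin n) ≠ i := by intro e; have := congrArg Fin.val e; simp at this
    simp [cfun, h, simpleRoot, this]; norm_num
  · simp [cfun, h, simpleRoot]

/-- fundamental weight vector -/
def omg {n : ℕ} (m : Fin n) : Fin n → ℝ := fun j => if j ≤ m then 1 else 0

lemma cfun_omg {n : ℕ} (i m : Fin n) (h : m ≠ i) : cfun i (omg m) = 0 := by
  have h' : (m : ℕ) ≠ i := fun e => h (Fin.ext e)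
  by_cases hi : (i : ℕ) + 1 < n
  · simp only [cfun, hi, dif_pos, omg, Fin.le_def]
    split_ifs <;> first | omega | simp
  · simp only [cfun, hi, dif_neg, omg, Fin.le_def, not_false_eq_true]
    rw [if_neg (by omega)]; simp

lemma sg_pos_roots {n : ℕ} (i : Fin n) (β : Fin n → ℝ) (hβ : β ∈ BnPos n)
    (hne : β ≠ simpleRoot n i) : spAct (sg i) β ∈ BnPos n := by
  by_cases h : (i : ℕ) + 1 < n
  · rcases hβ with ⟨a, b, hab, t, rfl⟩ | ⟨a, rfl⟩
    · rw [spAct_add, spAct_smul, spAct_stdB, spAct_stdB, sg_pos i h, sg_pos i h]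
      have hvs : ∀ k : Fin n, vS ((true, k) : SIdx n) = stdB n k := by simp [vS, rsgn]
      simp only [hvs]
      set σ := Equiv.swap i ⟨i + 1, h⟩ with hσ
      rcases lt_trichotomy (σ a) (σ b) with hl | he | hg
      · exact Or.inl ⟨_, _, hl, t, rfl⟩
      · exact absurd (σ.injective he) hab.ne
      · cases t
        · exfalso
          have : a = i ∧ b = ⟨i + 1, h⟩ := by
            rw [hσ, Equiv.swap_apply_def, Equiv.swap_apply_def] at hg
            simp only [Fin.ext_iff, Fin.lt_def] at *
            split_ifs at hg <;> simp at * <;> omega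
          obtain ⟨rfl, rfl⟩ := this
          apply hne
          funext k
          simp only [stdB, rsgn, simpleRoot, Pi.add_apply, Pi.smul_apply, Pi.single_apply,
            Fin.ext_iff]
          by_cases hk : (k : ℕ) = a + 1 <;> simp [sub_eq_add_neg, hk]
        · exact Or.inl ⟨_, _, hg, true, by simp [rsgn, add_comm]⟩
    · rw [spAct_stdB, sg_pos i h]
      exact Or.inr ⟨Equiv.swap i ⟨i + 1, h⟩ a, by simp [vS, rsgn]⟩
  · have hl : ∀ a : Fin n, a ≠ i → spAct (sg i) (stdB n a) = stdB n a := by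
      intro a ha
      rw [spAct_stdB, sg_last i h]; simp [ha, vS, rsgn]
    have hs : spAct (sg i) (stdB n i) = - stdB n i := by
      rw [spAct_stdB, sg_last i h]; simp [vS, rsgn]
    rcases hβ with ⟨a, b, hab, t, rfl⟩ | ⟨a, rfl⟩
    · have ha : a ≠ i := by
        rintro rfl
        have := b.2
        have := Fin.lt_def.1 hab
        omega
      rw [spAct_add, spAct_smul, hl a ha]
      by_cases hb : b = i
      · subst hb
        rw [hs]
        refine Or.inl ⟨_, _, hab, !t, ?_⟩
        cases t <;> simp [rsgn]
      · rw [hl b hb]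
        exact Or.inl ⟨_, _, hab, t, rfl⟩
    · by_cases ha : a = i
      · subst ha
        exfalso
        apply hne
        funext k
        have h2 : ¬ (k : ℕ) = a + 1 := by omega
        simp [stdB, simpleRoot, Pi.single_apply, h2]
      · rw [hl a ha]; exact Or.inr ⟨_, rfl⟩

lemma sg_linExt {n : ℕ} {P : Set (Fin n → ℝ)} {w : SIdx n ≃ SIdx n} (hw : w ∈ linExts n P)
    (i : Fin n) (hi : spAct w (simpleRoot n i) ∉ P) : (sg i).trans w ∈ linExts n P := by
  simp only [linExts, Finset.mem_filter, Finset.mem_univ, true_and] at hw ⊢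
  refine ⟨fun a => ?_, fun α hα => ?_⟩
  · simp [sg_neg, hw.1 _]
  · obtain ⟨β, hβ, rfl⟩ := hw.2 α hα
    refine ⟨spAct (sg i) β, sg_pos_roots i β hβ ?_, ?_⟩
    · rintro rfl; exact hi hα
    · rw [spAct_trans hw.1]
      congr 1
      rw [spAct_sg i (spAct (sg i) β), spAct_sg i β]
      have : cfun i (β - cfun i β • simpleRoot n i) = - cfun i β := by
        have h2 := cfun_simple i
        unfold cfun at h2 ⊢
        split_ifs at h2 ⊢ with h
        · simp only [Pi.sub_apply, Pi.smul_apply, smul_eq_mul]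
          linear_combination (-(β i - β ⟨i + 1, h⟩)) * h2
        · simp only [Pi.sub_apply, Pi.smul_apply, smul_eq_mul]
          linear_combination (-(2 * β i)) * h2
      rw [this]
      simp

lemma sg_trans_simple {n : ℕ} {w : SIdx n ≃ SIdx n} (hw : IsSPerm w) (i : Fin n) :
    spAct ((sg i).trans w) (simpleRoot n i) = - spAct w (simpleRoot n i) := by
  rw [spAct_trans hw, spAct_sg, cfun_simple, ← neg_one_smul ℝ (spAct w _), ← spAct_smul]
  congr 1
  module

lemma sg_trans_simple' {n : ℕ} {w : SIdx n ≃ SIdx n} (hw : IsSPerm w) (i j : Fin n) :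
    spAct ((sg i).trans w) (simpleRoot n j) = spAct w (simpleRoot n j)
      - cfun i (simpleRoot n j) • spAct w (simpleRoot n i) := by
  rw [spAct_trans hw, spAct_sg, sub_eq_add_neg, ← neg_smul, spAct_add, spAct_smul]
  module

lemma sg_trans_omg {n : ℕ} {w : SIdx n ≃ SIdx n} (hw : IsSPerm w) (i m : Fin n) (h : m ≠ i) :
    spAct ((sg i).trans w) (omg m) = spAct w (omg m) := by
  rw [spAct_trans hw, spAct_sg, cfun_omg i m h]
  simp

lemma chi_eq {n : ℕ} {w : SIdx n ≃ SIdx n} (hw : IsSPerm w) (m : Fin n) :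
    chiF (JwSet w m) = spAct w (omg m) := by
  funext k
  have hinj : ∀ j j' : Fin n, (w (true, j)).2 = (w (true, j')).2 → j = j' := by
    intro j j' h
    by_cases h1 : (w (true, j)).1 = (w (true, j')).1
    · have := w.injective (Prod.ext h1 h)
      simpa using this
    · have : w (true, j) = w (negS (true, j')) := by
        rw [hw]
        refine Prod.ext ?_ h
        simp only [negS]
        revert h1
        cases (w (true, j)).1 <;> cases (w (true, j')).1 <;> simp
      have := w.injective this
      simp [negS] at this
  have hsurj : ∃ j, (w (true, j)).2 = k :=
    (Finite.injective_iff_surjective.1 (fun j j' h => hinj j j' h :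
      Function.Injective fun j => (w (true, j)).2)) k
  obtain ⟨j, hj⟩ := hsurj
  have hR : spAct w (omg m) k = omg m j * rsgn (w (true, j)).1 := by
    simp only [spAct, Finset.sum_apply]
    rw [Finset.sum_eq_single j]
    · simp [vS, stdB, ← hj]
    · intro b _ hb
      have : k ≠ (w (true, b)).2 := by
        intro e; exact hb (hinj _ _ (e.symm.trans hj.symm))
      simp [vS, stdB, Pi.single_apply, this]
    · simp
  have hmem : ∀ s : Bool, ((s, k) : SIdx n) ∈ JwSet w m ↔ (j ≤ m ∧ (w (true, j)).1 = s) := by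
    intro s
    simp only [JwSet, Finset.mem_image, Finset.mem_filter, Finset.mem_univ, true_and]
    constructor
    · rintro ⟨a, ha, e⟩
      have : a = j := hinj _ _ (by rw [e, hj])
      subst this
      exact ⟨ha, by rw [e]⟩
    · rintro ⟨ha, e⟩
      exact ⟨j, ha, Prod.ext e hj⟩
  rw [hR]
  simp only [chiF, hmem, omg]
  cases (w (true, j)).1 <;> by_cases hjm : j ≤ m <;> simp [hjm, rsgn]

lemma spAct_surj {n : ℕ} {w : SIdx n ≃ SIdx n} (hw : IsSPerm w) (y : Fin n → ℝ) :
    ∃ z, spAct w z = y := by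
  refine ⟨∑ j, y j • vS (w.symm (true, j)), ?_⟩
  rw [spAct_sum]
  simp only [spAct_smul, spAct_vS hw, Equiv.apply_symm_apply]
  have : ∀ k : Fin n, vS ((true, k) : SIdx n) = stdB n k := by simp [vS, rsgn]
  simp only [this]
  funext k
  simp [stdB, Pi.single_apply]

lemma dot_spAct {n : ℕ} {w : SIdx n ≃ SIdx n} (hw : IsSPerm w) (y z : Fin n → ℝ) :
    dotR (spAct w y) (spAct w z) = dotR y z := by
  have hinj : ∀ j j' : Fin n, (w (true, j)).2 = (w (true, j')).2 → j = j' := by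
    intro j j' h
    by_cases h1 : (w (true, j)).1 = (w (true, j')).1
    · have := w.injective (Prod.ext h1 h)
      simpa using this
    · have : w (true, j) = w (negS (true, j')) := by
        rw [hw]
        refine Prod.ext ?_ h
        simp only [negS]
        revert h1
        cases (w (true, j)).1 <;> cases (w (true, j')).1 <;> simp
      have := w.injective this
      simp [negS] at this
  have hval : ∀ y : Fin n → ℝ, ∀ j, spAct w y (w (true, j)).2 = y j * rsgn (w (true, j)).1 := by
    intro y j
    simp only [spAct, Finset.sum_apply]
    rw [Finset.sum_eq_single j]
    · simp [vS, stdB]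
    · intro b _ hb
      have : (w (true, j)).2 ≠ (w (true, b)).2 := fun e => hb (hinj _ _ e.symm)
      simp [vS, stdB, Pi.single_apply, this]
    · simp
  have hb : Function.Bijective (fun j => (w (true, j)).2) :=
    Finite.injective_iff_bijective.1 (fun j j' h => hinj j j' h)
  unfold dotR
  rw [← hb.sum_comp]
  refine Finset.sum_congr rfl fun j _ => ?_
  rw [hval, hval]
  cases (w (true, j)).1 <;> simp [rsgn]

lemma dot_simple {n : ℕ} (y : Fin n → ℝ) (i : Fin n) : dotR y (simpleRoot n i) =
    y i - if h : (i : ℕ) + 1 < n then y ⟨i + 1, h⟩ else 0 := by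
  simp only [dotR, simpleRoot, mul_sub, Finset.sum_sub_distrib]
  congr 1
  · simp
  · split_ifs with h
    · rw [Finset.sum_eq_single ⟨i + 1, h⟩]
      · simp
      · intro b _ hb
        have : ¬ (b : ℕ) = i + 1 := fun e => hb (Fin.ext e)
        simp [this]
      · simp
    · apply Finset.sum_eq_zero
      intro b _
      have : ¬ (b : ℕ) = i + 1 := by omega
      simp [this]

lemma dot_omg_simple {n : ℕ} (m i : Fin n) : dotR (omg m) (simpleRoot n i) =
    if i = m then 1 else 0 := by
  rw [dot_simple]
  simp only [omg, Fin.le_def, Fin.ext_iff]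
  have := m.2
  split_ifs <;> first | omega | simp

lemma expand_omg {n : ℕ} (y : Fin n → ℝ) :
    ∑ m, dotR y (simpleRoot n m) • omg m = y := by
  funext k
  simp only [dot_simple, Finset.sum_apply, Pi.smul_apply, smul_eq_mul, omg]
  let l : ℕ → ℝ := fun a => if h : a < n then y ⟨a, h⟩ else 0
  have h1 : ∀ m : Fin n, (y m - if h : (m : ℕ) + 1 < n then y ⟨m + 1, h⟩ else 0) *
      (if k ≤ m then 1 else 0) = (fun a : ℕ => if (k : ℕ) ≤ a then l a - l (a + 1) else 0) m := by
    intro m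
    simp only [Fin.le_def, l, m.2, dif_pos, mul_ite, mul_one, mul_zero]
  simp only [h1]
  rw [Fin.sum_univ_eq_sum_range (fun a : ℕ => if (k : ℕ) ≤ a then l a - l (a + 1) else 0)]
  have h2 : ∀ N, (k : ℕ) ≤ N →
      ∑ a ∈ Finset.range N, (if (k : ℕ) ≤ a then l a - l (a + 1) else 0) = l k - l N := by
    intro N hN
    induction N, hN using Nat.le_induction with
    | base =>
      rw [sub_self]
      apply Finset.sum_eq_zero
      intro a ha
      rw [if_neg]; simpa using ha
    | succ N hN ih =>
      rw [Finset.sum_range_succ, ih, if_pos hN]; ring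
  rw [h2 n k.2.le]
  simp [l]

lemma expand_w {n : ℕ} {w : SIdx n ≃ SIdx n} (hw : IsSPerm w) (y : Fin n → ℝ) :
    y = ∑ m, dotR y (spAct w (simpleRoot n m)) • spAct w (omg m) := by
  obtain ⟨z, rfl⟩ := spAct_surj hw y
  simp only [dot_spAct hw, ← spAct_smul, ← spAct_sum]
  rw [expand_omg]

lemma dotR_sub {n : ℕ} (x y z : Fin n → ℝ) : dotR x (y - z) = dotR x y - dotR x z := by
  simp [dotR_eq]

lemma dotR_smul {n : ℕ} (c : ℝ) (x y : Fin n → ℝ) : dotR x (c • y) = c * dotR x y := by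
  simp [dotR_eq]

lemma dotR_neg {n : ℕ} (x y : Fin n → ℝ) : dotR x (-y) = - dotR x y := by
  simp [dotR_eq]

lemma dotR_line {n : ℕ} (x y z : Fin n → ℝ) (t : ℝ) :
    dotR (x + t • y) z = dotR x z + t * dotR y z := by
  simp [dotR_eq]

lemma isSPerm_of_mem {n : ℕ} {P : Set (Fin n → ℝ)} {w : SIdx n ≃ SIdx n}
    (hw : w ∈ linExts n P) : IsSPerm w := by
  simp only [linExts, Finset.mem_filter] at hw
  exact hw.2.1

lemma sum_cancel {n : ℕ} {P : Set (Fin n → ℝ)} (lam : Fin n → ℝ)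
    (hlam : ∀ α ∈ P, dotR lam α = 0) (f : (SIdx n ≃ SIdx n) → Fin n → ℝ)
    (h0 : ∀ w i, dotR lam (spAct w (simpleRoot n i)) = 0 → f w i = 0)
    (h1 : ∀ w ∈ linExts n P, ∀ i, f ((sg i).trans w) i = - f w i) :
    ∑ w ∈ linExts n P, ∑ i, f w i = 0 := by
  rw [← Finset.sum_product' (linExts n P) Finset.univ f]
  rw [← Finset.sum_filter_of_ne
    (p := fun p : (SIdx n ≃ SIdx n) × Fin n => dotR lam (spAct p.1 (simpleRoot n p.2)) ≠ 0)
    (fun p _ hp h => hp (h0 _ _ h))]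
  refine Finset.sum_involution (fun p _ => ((sg p.2).trans p.1, p.2)) ?_ ?_ ?_ ?_
  · rintro ⟨w, i⟩ hp
    simp only [Finset.mem_filter, Finset.mem_product, Finset.mem_univ, and_true] at hp
    simp only [h1 w hp.1 i]
    ring
  · rintro ⟨w, i⟩ hp hne heq
    simp only [Finset.mem_filter, Finset.mem_product, Finset.mem_univ, and_true] at hp
    have h2 := h1 w hp.1 i
    have h3 : (sg i).trans w = w := congrArg Prod.fst heq
    rw [h3] at h2
    apply hne
    show f w i = 0
    linarith
  · rintro ⟨w, i⟩ hp
    simp only [Finset.mem_filter, Finset.mem_product, Finset.mem_univ, and_true] at hp ⊢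
    refine ⟨sg_linExt hp.1 i fun h => hp.2 (hlam _ h), ?_⟩
    rw [sg_trans_simple (isSPerm_of_mem hp.1), dotR_neg]
    simpa using hp.2
  · rintro ⟨w, i⟩ hp
    refine Prod.ext ?_ rfl
    ext1 a
    simp [sg_sg]

lemma exists_lam {n : ℕ} {P : Set (Fin n → ℝ)} (hspan : Submodule.span ℝ P ≠ ⊤) :
    ∃ lam : Fin n → ℝ, lam ≠ 0 ∧ ∀ α ∈ P, dotR lam α = 0 := by
  obtain ⟨f, hf, hle⟩ := Submodule.exists_le_ker_of_lt_top _ (lt_top_iff_ne_top.2 hspan)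
  have hrep : ∀ y, dotR (fun i => f (stdB n i)) y = f y := by
    intro y
    have : y = ∑ i, y i • stdB n i := by
      funext k; simp [stdB, Pi.single_apply]
    conv_rhs => rw [this]
    simp [dotR, mul_comm]
  refine ⟨fun i => f (stdB n i), ?_, ?_⟩
  · intro h
    apply hf
    refine LinearMap.ext fun y => ?_
    rw [← hrep, h]; simp [dotR]
  · intro α hα
    rw [hrep]
    exact hle (Submodule.subset_span hα)

lemma dot_self_ne {n : ℕ} {y : Fin n → ℝ} (h : y ≠ 0) : dotR y y ≠ 0 := by
  rw [dotR_eq]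
  simpa using h

lemma limit_zero (g : ℝ → ℝ) (hg : ContinuousAt g 0)
    (h : ∀ᶠ t in nhdsWithin (0 : ℝ) {0}ᶜ, g t = 0) : g 0 = 0 := by
  have h1 : Filter.Tendsto g (nhdsWithin (0 : ℝ) {0}ᶜ) (nhds (g 0)) :=
    hg.tendsto.mono_left nhdsWithin_le_nhds
  have h2 : Filter.Tendsto g (nhdsWithin (0 : ℝ) {0}ᶜ) (nhds 0) :=
    tendsto_const_nhds.congr' (h.mono fun t ht => ht.symm)
  exact tendsto_nhds_unique h1 h2

lemma ev_ne (a b : ℝ) (h : a ≠ 0 ∨ b ≠ 0) :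
    ∀ᶠ t in nhdsWithin (0 : ℝ) {0}ᶜ, a + t * b ≠ 0 := by
  by_cases ha : a = 0
  · have hb : b ≠ 0 := by tauto
    filter_upwards [self_mem_nhdsWithin] with t ht
    subst ha
    simpa [hb] using ht
  · apply Filter.Eventually.filter_mono nhdsWithin_le_nhds
    have : ContinuousAt (fun t : ℝ => a + t * b) 0 := by fun_prop
    apply this.eventually_ne
    simpa using ha

lemma cont_sum {n : ℕ} {ι : Type} (s : Finset ι) (V : ι → Fin n → (Fin n → ℝ))
    (x y : Fin n → ℝ) (hx : ∀ w ∈ s, ∀ i, dotR x (V w i) ≠ 0) :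
    ContinuousAt (fun t : ℝ => ∑ w ∈ s, ∏ i, (dotR (x + t • y) (V w i))⁻¹) 0 := by
  simp only [dotR_line]
  refine tendsto_finsetSum _ fun w hw => tendsto_finsetProd _ fun i _ => ?_
  have : ContinuousAt (fun t : ℝ => dotR x (V w i) + t * dotR y (V w i)) 0 := by fun_prop
  exact this.inv₀ (by simpa using hx w hw i)

lemma part_two {n : ℕ} {P : Set (Fin n → ℝ)} (lam : Fin n → ℝ)
    (hlam : ∀ α ∈ P, dotR lam α = 0) (x : Fin n → ℝ)
    (hx : ∀ w ∈ linExts n P, ∀ m, dotR x (spAct w (omg m)) ≠ 0) (hxl : dotR x lam ≠ 0) :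
    ∑ w ∈ linExts n P, ∏ m, (dotR x (spAct w (omg m)))⁻¹ = 0 := by
  have key := sum_cancel lam hlam (fun w m => dotR lam (spAct w (simpleRoot n m)) *
    ∏ j ∈ Finset.univ.erase m, (dotR x (spAct w (omg j)))⁻¹) (by
      intro w i h; simp [h]) (by
      intro w hw i
      have hs := isSPerm_of_mem hw
      simp only [sg_trans_simple hs, dotR_neg, neg_mul]
      congr 2
      refine Finset.prod_congr rfl fun j hj => ?_
      rw [sg_trans_omg hs i j (Finset.ne_of_mem_erase hj)])
  have : dotR x lam * ∑ w ∈ linExts n P, ∏ m, (dotR x (spAct w (omg m)))⁻¹ = 0 := by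
    rw [← key, Finset.mul_sum]
    refine Finset.sum_congr rfl fun w hw => ?_
    have hs := isSPerm_of_mem hw
    have e : dotR x lam = ∑ m, dotR lam (spAct w (simpleRoot n m)) * dotR x (spAct w (omg m)) := by
      conv_lhs => rw [expand_w hs lam]
      simp [dotR_eq, dotProduct_sum]
    rw [e, Finset.sum_mul]
    refine Finset.sum_congr rfl fun m _ => ?_
    rw [← Finset.mul_prod_erase Finset.univ _ (Finset.mem_univ m)]
    have := hx w hw m
    field_simp
  exact (mul_eq_zero.1 this).resolve_left hxl

lemma partial_frac {n : ℕ} (a b : Fin n → ℝ) (ha : ∀ i, a i ≠ 0) (hb : ∃ i, b i ≠ 0)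
    (hab : ∀ i j, i ≠ j → b i ≠ 0 → b j ≠ 0 → a i * b j ≠ a j * b i) :
    ∏ i, (a i)⁻¹ = ∑ i, if b i = 0 then 0 else
      (a i)⁻¹ * ∏ j ∈ Finset.univ.erase i, (a j - a i * b j / b i)⁻¹ := by
  set S : Finset (Fin n) := Finset.univ.filter fun i => b i ≠ 0 with hS
  let v : Fin n → ℝ := fun i => - a i / b i
  have hmem : ∀ i, i ∈ S ↔ b i ≠ 0 := by simp [hS]
  have hinj : Set.InjOn v S := by
    intro i hi j hj h
    by_contra hne
    have hi' := (hmem i).1 hi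
    have hj' := (hmem j).1 hj
    apply hab i j hne hi' hj'
    simp only [v] at h
    field_simp at h
    linarith
  have hSn : S.Nonempty := by
    obtain ⟨i, hi⟩ := hb
    exact ⟨i, (hmem i).2 hi⟩
  have key := congrArg (Polynomial.eval 0) (Lagrange.sum_basis hinj hSn)
  rw [Polynomial.eval_finsetSum, Polynomial.eval_one] at key
  have hne : ∏ i, a i ≠ 0 := Finset.prod_ne_zero_iff.2 fun i _ => ha i
  have hL : ∏ i, (a i)⁻¹ = (∏ i, (a i)⁻¹) * ∑ i ∈ S, Polynomial.eval 0 (Lagrange.basis S v i) := by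
    rw [key, mul_one]
  rw [hL, Finset.mul_sum]
  have hR : ∀ i, (if b i = 0 then 0 else
      (a i)⁻¹ * ∏ j ∈ Finset.univ.erase i, (a j - a i * b j / b i)⁻¹) =
      if b i ≠ 0 then
      (a i)⁻¹ * ∏ j ∈ Finset.univ.erase i, (a j - a i * b j / b i)⁻¹ else 0 := by
    intro i; by_cases h : b i = 0 <;> simp [h]
  simp only [hR]
  rw [← Finset.sum_filter]
  refine Finset.sum_congr rfl fun i hi => ?_
  have hi' := (hmem i).1 hi
  have e1 : Polynomial.eval 0 (Lagrange.basis S v i) =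
      ∏ j ∈ S.erase i, (a j * (a j - a i * b j / b i)⁻¹) := by
    rw [Lagrange.basis, Polynomial.eval_prod]
    refine Finset.prod_congr rfl fun j hj => ?_
    have hj' := (hmem j).1 (Finset.mem_of_mem_erase hj)
    have hji := Finset.ne_of_mem_erase hj
    simp only [Lagrange.basisDivisor, Polynomial.eval_mul, Polynomial.eval_C, Polynomial.eval_sub,
      Polynomial.eval_X, v]
    have e2 : a j - a i * b j / b i = b j * (-a i / b i - -a j / b j) := by
      field_simp; ring
    rw [e2, mul_inv]
    field_simp
    ring
  have e3 : ∏ j ∈ S.erase i, (a j * (a j - a i * b j / b i)⁻¹) =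
      ∏ j ∈ Finset.univ.erase i, (a j * (a j - a i * b j / b i)⁻¹) := by
    refine Finset.prod_subset (Finset.erase_subset_erase _ (Finset.subset_univ _)) ?_
    intro j hj hj2
    have hji := Finset.ne_of_mem_erase hj
    have : b j = 0 := by
      by_contra hb
      exact hj2 (Finset.mem_erase.2 ⟨hji, (hmem j).2 hb⟩)
    simp [this, ha j]
  rw [e1, e3, Finset.prod_mul_distrib, ← mul_assoc,
    ← Finset.mul_prod_erase Finset.univ (fun i => (a i)⁻¹) (Finset.mem_univ i), mul_assoc (a i)⁻¹,
    ← Finset.prod_mul_distrib]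
  congr 1
  rw [Finset.prod_congr rfl (fun j _ => inv_mul_cancel₀ (ha j))]
  simp

lemma exists_b {n : ℕ} {w : SIdx n ≃ SIdx n} (hw : IsSPerm w) {lam : Fin n → ℝ} (h : lam ≠ 0) :
    ∃ i, dotR lam (spAct w (simpleRoot n i)) ≠ 0 := by
  by_contra! hc
  apply h
  rw [expand_w hw lam]
  simp [hc]

lemma part_one {n : ℕ} {P : Set (Fin n → ℝ)} (lam : Fin n → ℝ) (hl0 : lam ≠ 0)
    (hlam : ∀ α ∈ P, dotR lam α = 0) (x : Fin n → ℝ)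
    (hx : ∀ w ∈ linExts n P, ∀ m, dotR x (spAct w (simpleRoot n m)) ≠ 0)
    (hgen : ∀ w ∈ linExts n P, ∀ i j, i ≠ j → dotR lam (spAct w (simpleRoot n i)) ≠ 0 →
      dotR lam (spAct w (simpleRoot n j)) ≠ 0 →
      dotR x (spAct w (simpleRoot n i)) * dotR lam (spAct w (simpleRoot n j)) ≠
      dotR x (spAct w (simpleRoot n j)) * dotR lam (spAct w (simpleRoot n i))) :
    ∑ w ∈ linExts n P, ∏ m, (dotR x (spAct w (simpleRoot n m)))⁻¹ = 0 := by
  rw [Finset.sum_congr rfl fun w hw => partial_frac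
    (fun m => dotR x (spAct w (simpleRoot n m))) (fun m => dotR lam (spAct w (simpleRoot n m)))
    (hx w hw) (exists_b (isSPerm_of_mem hw) hl0) (hgen w hw)]
  refine sum_cancel lam hlam (fun w i => if dotR lam (spAct w (simpleRoot n i)) = 0 then 0 else
      (dotR x (spAct w (simpleRoot n i)))⁻¹ * ∏ j ∈ Finset.univ.erase i,
        (dotR x (spAct w (simpleRoot n j)) - dotR x (spAct w (simpleRoot n i)) *
          dotR lam (spAct w (simpleRoot n j)) / dotR lam (spAct w (simpleRoot n i)))⁻¹) ?_ ?_
  · intro w i h; simp [h]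
  · intro w hw i
    have hs := isSPerm_of_mem hw
    by_cases hb : dotR lam (spAct w (simpleRoot n i)) = 0
    · simp [sg_trans_simple hs, dotR_neg, hb]
    · simp only [sg_trans_simple hs, dotR_neg, hb, neg_eq_zero, if_false]
      rw [inv_neg, neg_mul]
      congr 2
      refine Finset.prod_congr rfl fun j hj => ?_
      rw [sg_trans_simple' hs, dotR_sub, dotR_sub, dotR_smul, dotR_smul]
      congr 1
      field_simp
      ring

lemma exists_generic {n : ℕ} {ι : Type} [Finite ι] (u : ι → Fin n → ℝ) (hu : ∀ i, u i ≠ 0) :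
    ∃ y : Fin n → ℝ, ∀ i, dotR y (u i) ≠ 0 := by
  obtain ⟨f, hf⟩ := Module.exists_dual_forall_apply_ne_zero (K := ℝ) u hu
  refine ⟨fun i => f (stdB n i), fun i => ?_⟩
  have : dotR (fun i => f (stdB n i)) (u i) = f (u i) := by
    have : u i = ∑ k, u i k • stdB n k := by
      funext k; simp [stdB, Pi.single_apply]
    conv_rhs => rw [this]
    simp [dotR, mul_comm]
  rw [this]
  exact hf i

theorem statement_4 (n : ℕ) (hn : 1 ≤ n) (P : Set (Fin n → ℝ)) (hP : IsSignedPoset n P)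
    (hspan : Submodule.span ℝ P ≠ ⊤) :
    (∀ x : Fin n → ℝ,
      (∀ w ∈ linExts n P, ∀ i : Fin n, dotR x (spAct w (simpleRoot n i)) ≠ 0) →
      ∑ w ∈ linExts n P, ∏ i : Fin n, (dotR x (spAct w (simpleRoot n i)))⁻¹ = 0) ∧
    ∀ x : Fin n → ℝ,
      (∀ w ∈ linExts n P, ∀ m : Fin n, dotR x (chiF (JwSet w m)) ≠ 0) →
      ∑ w ∈ linExts n P, ∏ m : Fin n, (dotR x (chiF (JwSet w m)))⁻¹ = 0 := by
  obtain ⟨lam, hl0, hlam⟩ := exists_lam hspan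
  refine ⟨fun x hx => ?_, fun x hx => ?_⟩
  · let b : (SIdx n ≃ SIdx n) → Fin n → ℝ := fun w i => dotR lam (spAct w (simpleRoot n i))
    let ι := {p : (SIdx n ≃ SIdx n) × Fin n × Fin n //
      p.1 ∈ linExts n P ∧ p.2.1 ≠ p.2.2 ∧ b p.1 p.2.1 ≠ 0}
    let u : ι → Fin n → ℝ := fun p =>
      b p.1.1 p.1.2.2 • spAct p.1.1 (simpleRoot n p.1.2.1) -
      b p.1.1 p.1.2.1 • spAct p.1.1 (simpleRoot n p.1.2.2)
    have hu : ∀ p, u p ≠ 0 := by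
      rintro ⟨⟨w, i, j⟩, hw, hij, hb⟩ h0
      have hs := isSPerm_of_mem hw
      have h1 : dotR (spAct w (omg j)) (b w j • spAct w (simpleRoot n i) -
          b w i • spAct w (simpleRoot n j)) = 0 := by
        have : b w j • spAct w (simpleRoot n i) - b w i • spAct w (simpleRoot n j) = 0 := h0
        rw [this]; simp [dotR]
      rw [dotR_sub, dotR_smul, dotR_smul, dot_spAct hs, dot_spAct hs, dot_omg_simple,
        dot_omg_simple, if_neg hij, if_pos rfl] at h1
      apply hb
      show b w i = 0
      linarith
    obtain ⟨y, hy⟩ := exists_generic u hu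
    have hlim := limit_zero _ (cont_sum (linExts n P) (fun w i => spAct w (simpleRoot n i)) x y hx)
      (by
        have e1 : ∀ᶠ t in nhdsWithin (0 : ℝ) {0}ᶜ, ∀ w ∈ linExts n P, ∀ i,
            dotR x (spAct w (simpleRoot n i)) + t * dotR y (spAct w (simpleRoot n i)) ≠ 0 := by
          rw [Filter.eventually_all_finset]
          intro w hw
          rw [Filter.eventually_all]
          exact fun i => ev_ne _ _ (Or.inl (hx w hw i))
        have e2 : ∀ᶠ t in nhdsWithin (0 : ℝ) {0}ᶜ, ∀ p : ι,
            dotR x (u p) + t * dotR y (u p) ≠ 0 := by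
          rw [Filter.eventually_all]
          exact fun p => ev_ne _ _ (Or.inr (hy p))
        filter_upwards [e1, e2] with t h1 h2
        refine part_one lam hl0 hlam (x + t • y) ?_ ?_
        · intro w hw m
          rw [dotR_line]; exact h1 w hw m
        · intro w hw i j hij hbi hbj heq
          apply h2 ⟨(w, i, j), hw, hij, hbi⟩
          rw [← dotR_line]
          simp only [u, dotR_sub, dotR_smul, b]
          linarith)
    simpa using hlim
  · have hc : ∀ z : Fin n → ℝ, ∑ w ∈ linExts n P, ∏ m : Fin n, (dotR z (chiF (JwSet w m)))⁻¹ =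
        ∑ w ∈ linExts n P, ∏ m : Fin n, (dotR z (spAct w (omg m)))⁻¹ := by
      intro z
      refine Finset.sum_congr rfl fun w hw => Finset.prod_congr rfl fun m _ => ?_
      rw [chi_eq (isSPerm_of_mem hw)]
    rw [hc]
    have hx' : ∀ w ∈ linExts n P, ∀ m, dotR x (spAct w (omg m)) ≠ 0 := by
      intro w hw m
      rw [← chi_eq (isSPerm_of_mem hw)]; exact hx w hw m
    have hlim := limit_zero _ (cont_sum (linExts n P) (fun w i => spAct w (omg i)) x lam hx')
      (by
        have e1 : ∀ᶠ t in nhdsWithin (0 : ℝ) {0}ᶜ, ∀ w ∈ linExts n P, ∀ i,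
            dotR x (spAct w (omg i)) + t * dotR lam (spAct w (omg i)) ≠ 0 := by
          rw [Filter.eventually_all_finset]
          intro w hw
          rw [Filter.eventually_all]
          exact fun i => ev_ne _ _ (Or.inl (hx' w hw i))
        filter_upwards [e1, ev_ne (dotR x lam) (dotR lam lam) (Or.inr (dot_self_ne hl0))]
          with t h1 h2
        refine part_two lam hlam (x + t • lam) ?_ ?_
        · intro w hw m
          rw [dotR_line]; exact h1 w hw m
        · rw [dotR_line]; exact h2)
    simpa using hlim
end
end

section
/- For every signed poset P ⊆ Φ_{B_n}, the weight cone K^wt_P spans ℝ^n as a real vector space; in fact there exist n linearly independent vectors ε^{(1)}, …, ε^{(n)} ∈ {−1,0,1}^n with ⟨ε^{(k)}, α⟩ ≥ 0 for all α ∈ P and all 1 ≤ k ≤ n. -/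
open scoped Classical

noncomputable section

lemma aux_dot_single {n : ℕ} (x : Fin n → ℝ) (s : Bool) (i : Fin n) :
    dotR x (rsgn s • stdB n i) = rsgn s * x i := by
  simp [dotR, stdB, Pi.single_apply, mul_comm]

lemma aux_dot_add {n : ℕ} (x y z : Fin n → ℝ) : dotR x (y + z) = dotR x y + dotR x z := by
  simp [dotR, mul_add, Finset.sum_add_distrib]

lemma aux_neg_root {n : ℕ} (α : Fin n → ℝ) (h : α ∈ BnRoots n) : -α ∈ BnRoots n := by
  have hr : ∀ s : Bool, rsgn (!s) = - rsgn s := by intro s; cases s <;> simp [rsgn]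
  rcases h with ⟨i, j, hij, s, t, rfl⟩ | ⟨i, s, rfl⟩
  · refine Or.inl ⟨i, j, hij, !s, !t, ?_⟩
    rw [hr, hr]; module
  · refine Or.inr ⟨i, !s, ?_⟩
    rw [hr]; module

lemma aux_finite (n : ℕ) : (BnRoots n).Finite := by
  have : BnRoots n ⊆
      Set.range (fun p : Fin n × Fin n × Bool × Bool =>
        rsgn p.2.2.1 • stdB n p.1 + rsgn p.2.2.2 • stdB n p.2.1) ∪
      Set.range (fun p : Fin n × Bool => rsgn p.2 • stdB n p.1) := by
    rintro α (⟨i, j, -, s, t, rfl⟩ | ⟨i, s, rfl⟩)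
    · exact Or.inl ⟨(i, j, s, t), rfl⟩
    · exact Or.inr ⟨(i, s), rfl⟩
  exact ((Set.finite_range _).union (Set.finite_range _)).subset this

/-- A signed poset lies in an open half space. -/
lemma aux_exists_pos (n : ℕ) (P : Set (Fin n → ℝ)) (hP : IsSignedPoset n P) :
    ∃ f : Fin n → ℝ, ∀ α ∈ P, 0 < dotR f α := by
  obtain ⟨hsub, hanti, hcl⟩ := hP
  have hfin : P.Finite := (aux_finite n).subset hsub
  have h0 : (0 : Fin n → ℝ) ∉ convexHull ℝ P := by
    intro h
    rw [← hfin.coe_toFinset, Finset.mem_convexHull'] at h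
    obtain ⟨w, hw0, hw1, hws⟩ := h
    obtain ⟨a, ha, hwa⟩ : ∃ a ∈ hfin.toFinset, w a ≠ 0 := by
      by_contra! hc
      rw [Finset.sum_eq_zero hc] at hw1
      exact zero_ne_one hw1
    have haP : a ∈ P := hfin.mem_toFinset.1 ha
    have hwpos : 0 < w a := lt_of_le_of_ne (hw0 a ha) (Ne.symm hwa)
    refine hanti a haP (hcl _ (aux_neg_root a (hsub haP)) ?_)
    set S := hfin.toFinset with hS
    let e := S.equivFin
    refine ⟨S.card, fun m => if (e.symm m : Fin n → ℝ) = a then 0 else w (e.symm m) / w a,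
      fun m => e.symm m, ?_, ?_, ?_⟩
    · intro m
      dsimp only
      split_ifs
      · exact le_rfl
      · exact div_nonneg (hw0 _ (e.symm m).2) hwpos.le
    · intro m
      exact hfin.mem_toFinset.1 (e.symm m).2
    · rw [e.symm.sum_comp (fun y : S => (if (y : Fin n → ℝ) = a then (0:ℝ) else w y / w a) •
        (y : Fin n → ℝ)),
        Finset.sum_coe_sort S (fun y => (if y = a then (0:ℝ) else w y / w a) • y)]
      have h1 : ∀ y ∈ S, (if y = a then (0:ℝ) else w y / w a) • y
          = (w a)⁻¹ • (w y • y) - (if y = a then y else 0) := by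
        intro y _
        split_ifs with hy
        · subst hy
          rw [smul_smul, inv_mul_cancel₀ hwa]; simp
        · rw [smul_smul, div_eq_inv_mul]; simp
      rw [Finset.sum_congr rfl h1, Finset.sum_sub_distrib, ← Finset.smul_sum, hws]
      simp [ha]
  obtain ⟨g, u, hu, hg⟩ := geometric_hahn_banach_point_closed (convex_convexHull ℝ P)
    (hfin.isClosed_convexHull (𝕜 := ℝ)) h0
  refine ⟨fun i => g (stdB n i), fun α hα => ?_⟩
  have h1 := hg α (subset_convexHull ℝ P hα)
  have h2 : g α = dotR (fun i => g (stdB n i)) α := by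
    conv_lhs => rw [pi_eq_sum_univ' α]
    simp [dotR, stdB, map_sum, mul_comm]
  rw [map_zero] at hu
  linarith

def auxKey {n : ℕ} (f : Fin n → ℝ) (i : Fin n) : ℝ ×ₗ Fin n := toLex (|f i|, i)

def auxEps {n : ℕ} (f : Fin n → ℝ) (k i : Fin n) : ℝ :=
  if auxKey f k ≤ auxKey f i then (if 0 ≤ f i then 1 else -1) else 0

lemma aux_key_inj {n : ℕ} (f : Fin n → ℝ) : Function.Injective (auxKey f) := by
  intro i j h
  have := congrArg (fun x => (ofLex x).2) h
  simpa [auxKey] using this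

lemma aux_key_lt {n : ℕ} (f : Fin n → ℝ) (i j : Fin n) (h : |f i| < |f j|) :
    auxKey f i < auxKey f j := by
  rw [auxKey, auxKey, Prod.Lex.toLex_lt_toLex]
  exact Or.inl h

lemma aux_eps_single {n : ℕ} (f : Fin n → ℝ) (k i : Fin n) (s : Bool) (h : 0 < rsgn s * f i) :
    0 ≤ rsgn s * auxEps f k i := by
  cases s <;> simp only [rsgn, auxEps] at * <;> split_ifs <;> simp at * <;> linarith

lemma aux_eps_dom {n : ℕ} (f : Fin n → ℝ) (k i j : Fin n) (s t : Bool)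
    (h : 0 < rsgn s * f i + rsgn t * f j) (hij : |f j| < |f i|) :
    0 ≤ rsgn s * auxEps f k i + rsgn t * auxEps f k j := by
  have hk := aux_key_lt f j i hij
  have habs : ∀ (s : Bool) (x : ℝ), |rsgn s * x| = |x| := by
    intro s x; cases s <;> simp [rsgn]
  have hpos : 0 < rsgn s * f i := by
    rw [← habs t (f j), ← habs s (f i)] at hij
    by_contra! hc
    rw [abs_of_nonpos hc] at hij
    have := le_abs_self (rsgn t * f j)
    linarith
  by_cases hki : auxKey f k ≤ auxKey f i
  · have h1 : rsgn s * auxEps f k i = 1 := by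
      cases s <;> simp only [rsgn, auxEps, if_pos hki] at * <;> split_ifs <;> simp at * <;> linarith
    have h2 : -1 ≤ rsgn t * auxEps f k j := by
      cases t <;> simp only [rsgn, auxEps] <;> split_ifs <;> norm_num at *
    linarith
  · have hkj : ¬ auxKey f k ≤ auxKey f j := fun h => hki (h.trans hk.le)
    simp [auxEps, hki, hkj]

lemma aux_eps_pair {n : ℕ} (f : Fin n → ℝ) (k i j : Fin n) (s t : Bool)
    (h : 0 < rsgn s * f i + rsgn t * f j) :
    0 ≤ rsgn s * auxEps f k i + rsgn t * auxEps f k j := by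
  rcases lt_trichotomy (|f i|) (|f j|) with hlt | heq | hgt
  · rw [add_comm] at h ⊢
    exact aux_eps_dom f k j i t s h hlt
  · have h1 : 0 < rsgn s * f i ∧ 0 < rsgn t * f j := by
      rcases abs_eq_abs.1 heq with e | e <;> cases s <;> cases t <;> simp [rsgn] at * <;>
        constructor <;> linarith
    exact add_nonneg (aux_eps_single f k i s h1.1) (aux_eps_single f k j t h1.2)
  · exact aux_eps_dom f k i j s t h hgt

lemma aux_eps_li {n : ℕ} (f : Fin n → ℝ) : LinearIndependent ℝ (auxEps f) := by
  rw [Fintype.linearIndependent_iff]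
  intro c hc
  by_contra! hne
  obtain ⟨i0, hi0⟩ := hne
  obtain ⟨i, hi, hmin⟩ := Finset.exists_min_image (Finset.univ.filter fun i => c i ≠ 0) (auxKey f)
    ⟨i0, by simp [hi0]⟩
  have hci : c i ≠ 0 := by simpa using hi
  have h1 := congrFun hc i
  rw [Finset.sum_apply, Finset.sum_eq_single i] at h1
  · simp only [Pi.smul_apply, smul_eq_mul, Pi.zero_apply, auxEps, le_refl, if_true] at h1
    split_ifs at h1 <;> simp at h1 <;> exact hci h1
  · intro k _ hki
    by_cases hck : c k = 0
    · simp [hck]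
    · have h2 := hmin k (by simp [hck])
      have h3 : ¬ auxKey f k ≤ auxKey f i := fun h => hki (aux_key_inj f (le_antisymm h h2))
      simp [auxEps, h3]
  · simp

theorem statement_6 (n : ℕ) (hn : 1 ≤ n) (P : Set (Fin n → ℝ)) (hP : IsSignedPoset n P) :
    Submodule.span ℝ (weightCone P) = ⊤ ∧
    ∃ ε : Fin n → (Fin n → ℝ), LinearIndependent ℝ ε ∧
      ∀ m : Fin n, (∀ i : Fin n, ε m i = -1 ∨ ε m i = 0 ∨ ε m i = 1) ∧
        ∀ α ∈ P, 0 ≤ dotR (ε m) α := by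
  obtain ⟨f, hf⟩ := aux_exists_pos n P hP
  have hw : ∀ m, ∀ α ∈ P, 0 ≤ dotR (auxEps f m) α := by
    intro m α hα
    have h := hf α hα
    rcases hP.1 hα with ⟨i, j, -, s, t, rfl⟩ | ⟨i, s, rfl⟩
    · rw [aux_dot_add, aux_dot_single, aux_dot_single] at h ⊢
      exact aux_eps_pair f m i j s t h
    · rw [aux_dot_single] at h ⊢
      exact aux_eps_single f m i s h
  refine ⟨?_, auxEps f, aux_eps_li f, fun m => ⟨fun i => ?_, hw m⟩⟩
  · rw [eq_top_iff, ← (aux_eps_li f).span_eq_top_of_card_eq_finrank' (by simp)]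
    apply Submodule.span_mono
    rintro _ ⟨m, rfl⟩
    exact hw m
  · unfold auxEps
    split_ifs <;> simp
end
end

section
/- Let P ⊆ Φ_{B_n} be a signed poset. The root cone K^rt_P is full-dimensional (its ℝ-linear span is all of ℝ^n) if and only if there is no nonzero vector ε ∈ {−1,0,1}^n with ⟨ε, α⟩ = 0 for all α ∈ P. Equivalently, K^rt_P is full-dimensional if and only if the weight cone K^wt_P is pointed, i.e., there is no nonzero f ∈ ℝ^n with both f and −f in K^wt_P; in particular, when K^rt_P is not full-dimensional there is a nonzero ε ∈ {−1,0,1}^n such that ⟨ε, α⟩ ≥ 0 and ⟨−ε, α⟩ ≥ 0 for all α ∈ P (i.e., both ε and −ε are ideal vectors of P). -/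
open scoped Classical

noncomputable section

theorem dotR_neg_aux {n : ℕ} (f α : Fin n → ℝ) : dotR (-f) α = - dotR f α := by
  simp [dotR]

theorem span_rootCone_aux {n : ℕ} (P : Set (Fin n → ℝ)) :
    Submodule.span ℝ (rootCone P) = ⊤ ↔
      ∀ f : Fin n → ℝ, (∀ α ∈ P, dotR f α = 0) → f = 0 := by
  constructor
  · intro h f hf
    have key : ∀ x ∈ Submodule.span ℝ (rootCone P), dotR f x = 0 := by
      intro x hx
      induction hx using Submodule.span_induction with
      | mem x hx =>
        obtain ⟨r, c, β, -, hβ, rfl⟩ := hx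
        have : dotR f (∑ m, c m • β m) = ∑ m, c m * dotR f (β m) := by
          simp only [dotR, Finset.sum_apply, Pi.smul_apply, smul_eq_mul, Finset.mul_sum]
          rw [Finset.sum_comm]
          exact Finset.sum_congr rfl fun _ _ => Finset.sum_congr rfl fun _ _ => by ring
        rw [this]
        exact Finset.sum_eq_zero fun m _ => by rw [hf _ (hβ m), mul_zero]
      | zero => simp [dotR]
      | add x y _ _ hx hy =>
        have : dotR f (x + y) = dotR f x + dotR f y := by
          simp [dotR, mul_add, Finset.sum_add_distrib]
        rw [this, hx, hy, add_zero]
      | smul a x _ hx =>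
        have : dotR f (a • x) = a * dotR f x := by
          simp only [dotR, Pi.smul_apply, smul_eq_mul, Finset.mul_sum]
          exact Finset.sum_congr rfl fun _ _ => by ring
        rw [this, hx, mul_zero]
    have h0 : dotR f f = 0 := key f (by rw [h]; trivial)
    funext i
    have := (Finset.sum_eq_zero_iff_of_nonneg (fun i _ => mul_self_nonneg (f i))).1 h0 i
      (Finset.mem_univ i)
    exact mul_self_eq_zero.1 this
  · intro h
    by_contra hne
    obtain ⟨φ, hφ, hle⟩ := Submodule.exists_le_ker_of_lt_top _ (lt_top_iff_ne_top.2 hne)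
    have hx : ∀ x : Fin n → ℝ, dotR (fun i => φ (Pi.single i 1)) x = φ x := by
      intro x
      rw [LinearMap.pi_apply_eq_sum_univ φ x]
      simp only [dotR, smul_eq_mul]
      refine Finset.sum_congr rfl fun i _ => ?_
      rw [mul_comm]
      congr 2
      funext j
      simp [Pi.single_apply, eq_comm]
    have := h (fun i => φ (Pi.single i 1)) (by
      intro α hα
      rw [hx]
      exact hle (Submodule.subset_span
        ⟨1, fun _ => 1, fun _ => α, by simp, by simpa using hα, by simp⟩))
    apply hφ
    ext i
    simpa using congrFun this i

theorem dotR_stdB_aux {n : ℕ} (f : Fin n → ℝ) (i : Fin n) (s : Bool) :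
    dotR f (rsgn s • stdB n i) = rsgn s * f i := by
  simp [dotR, stdB, Pi.single_apply, mul_comm]

theorem dotR_add_aux {n : ℕ} (f x y : Fin n → ℝ) : dotR f (x + y) = dotR f x + dotR f y := by
  simp [dotR, mul_add, Finset.sum_add_distrib]

theorem sign_orth_aux {n : ℕ} (f α : Fin n → ℝ) (hα : α ∈ BnRoots n) (h : dotR f α = 0) :
    dotR (fun i => ((SignType.sign (f i) : SignType) : ℝ)) α = 0 := by
  obtain ⟨i, j, -, s, t, rfl⟩ | ⟨i, s, rfl⟩ := hα
  · rw [dotR_add_aux, dotR_stdB_aux, dotR_stdB_aux] at h ⊢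
    cases s <;> cases t <;> simp only [rsgn, if_true, Bool.false_eq_true, if_false] at h ⊢
    · have : f i = - f j := by linarith
      simp [this, Left.sign_neg]
    · have : f i = f j := by linarith
      simp [this]
    · have : f i = f j := by linarith
      simp [this]
    · have : f i = - f j := by linarith
      simp [this, Left.sign_neg]
  · rw [dotR_stdB_aux] at h ⊢
    have : f i = 0 := by
      cases s <;> simpa [rsgn] using h
    simp [this]

theorem statement_7 (n : ℕ) (hn : 1 ≤ n) (P : Set (Fin n → ℝ)) (hP : IsSignedPoset n P) :
    (Submodule.span ℝ (rootCone P) = ⊤ ↔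
      ¬∃ ε : Fin n → ℝ, ε ≠ 0 ∧ (∀ i, ε i = -1 ∨ ε i = 0 ∨ ε i = 1) ∧
        ∀ α ∈ P, dotR ε α = 0) ∧
    (Submodule.span ℝ (rootCone P) = ⊤ ↔
      ∀ f : Fin n → ℝ, f ∈ weightCone P → -f ∈ weightCone P → f = 0) ∧
    (Submodule.span ℝ (rootCone P) ≠ ⊤ →
      ∃ ε : Fin n → ℝ, ε ≠ 0 ∧ (∀ i, ε i = -1 ∨ ε i = 0 ∨ ε i = 1) ∧
        ε ∈ weightCone P ∧ -ε ∈ weightCone P) := by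
  have hex : Submodule.span ℝ (rootCone P) ≠ ⊤ →
      ∃ ε : Fin n → ℝ, ε ≠ 0 ∧ (∀ i, ε i = -1 ∨ ε i = 0 ∨ ε i = 1) ∧
        ∀ α ∈ P, dotR ε α = 0 := by
    intro hne
    rw [Ne, span_rootCone_aux] at hne
    push Not at hne
    obtain ⟨f, hf, hf0⟩ := hne
    refine ⟨fun i => ((SignType.sign (f i) : SignType) : ℝ), ?_, ?_, ?_⟩
    · intro h0
      apply hf0
      funext i
      have hi : ((SignType.sign (f i) : SignType) : ℝ) = 0 := congrFun h0 i
      rcases lt_trichotomy (f i) 0 with h | h | h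
      · simp [h] at hi
      · exact h
      · simp [h] at hi
    · intro i
      rcases lt_trichotomy (f i) 0 with h | h | h
      · left; simp [h]
      · right; left; simp [h]
      · right; right; simp [h]
    · intro α hα
      exact sign_orth_aux f α (hP.1 hα) (hf α hα)
  refine ⟨⟨?_, ?_⟩, ?_, ?_⟩
  · rintro h ⟨ε, h0, -, hε⟩
    exact h0 ((span_rootCone_aux P).1 h ε hε)
  · intro h
    by_contra hne
    exact h (hex hne)
  · rw [span_rootCone_aux]
    constructor
    · intro h f h1 h2
      refine h f fun α hα => ?_
      have a := h1 α hα
      have b := h2 α hα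
      rw [dotR_neg_aux] at b
      linarith
    · intro h f hf
      refine h f (fun α hα => (hf α hα).ge) (fun α hα => ?_)
      rw [dotR_neg_aux, hf α hα, neg_zero]
  · intro hne
    obtain ⟨ε, h0, h1, h2⟩ := hex hne
    refine ⟨ε, h0, h1, fun α hα => (h2 α hα).ge, fun α hα => ?_⟩
    rw [dotR_neg_aux, h2 α hα, neg_zero]
end
end
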